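/- arXiv:1509.02803 — 3 statements merged into one kernel-verified Lean document; each statement's English description precedes it below -/
import Mathlib

section
/- There is an absolute constant c > 0 with the following property. Let p ∈ [1, ∞), σ, M > 0, and let f : ℝ → ℂ be bandlimited with parameters (σ, M). Then for all bounded self-adjoint operators A and B on a complex Hilbert space, (Σ_{j∈ℕ} s_j(f(A) − f(B))^p)^{1/p} ≤ c·σ·M·(Σ_{j∈ℕ} s_j(A − B)^p)^{1/p} (both sides computed in [0, ∞]). In particular, if A − B belongs to the Schatten class S_p then so does f(A) − f(B). -/
open scoped ENNReal

/-- The `j`-th singular value of a bounded operator `T`: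
`s_j(T) = inf { ‖T − R‖ : rank R ≤ j }`. -/
noncomputable def singularValue {H : Type*} [NormedAddCommGroup H]
    [InnerProductSpace ℂ H] (T : H →L[ℂ] H) (j : ℕ) : ℝ :=
  sInf {r : ℝ | ∃ R : H →L[ℂ] H,
    Module.rank ℂ (LinearMap.range (R : H →ₗ[ℂ] H)) ≤ (j : Cardinal) ∧ r = ‖T - R‖}

/-!
Cauchy's formula on the boundary of the strip `|Im z| ≤ a`, where `‖F‖ ≤ C`, and the second
resolvent identity give
`F(A) - F(B) = (2πi)⁻¹ ∮ F(z) (z - A)⁻¹ (A - B) (z - B)⁻¹ dz`.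
When `A - B` is, up to a small error, the sum of `l m • ⟪u m, ·⟫ u m` with `u` orthonormal and
`|l m| ≤ s_m(A - B)`, the inequality `2 x y ≤ x² + y²` bounds `|⟪g, (F(A) - F(B)) e⟫|` by
`∑ m, w(m) |l m|`, where `w(m)` is made of `∫ |⟪u m, (z - A)⁻¹ g⟫|²` and
`∫ |⟪u m, (z - B)⁻¹ e⟫|²` over the two boundary lines.
Since `∫ ‖(t + ia - A)⁻¹ v‖² dt = (π / a) ‖v‖²`, Bessel's inequality bounds by `C / a` the row and
column sums of the matrix obtained by letting `g` and `e` run over orthonormal families, and the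
Schur test bounds the `ℓ^p` norm of the numbers `⟪g i, (F(A) - F(B)) (e i)⟫`.
Repeated deflation by finite rank projections yields families for which these numbers are
arbitrarily close to dominating `s_0, s_2, s_4, …`, and as singular values decrease the even ones
control all of them. A bandlimited function is bounded by `e M` on the strip with `a = 1 / σ`.
-/

section SingularValue

variable {H : Type*} [NormedAddCommGroup H] [InnerProductSpace ℂ H]

lemma singularValue_nonneg (T : H →L[ℂ] H) (j : ℕ) : 0 ≤ singularValue T j := by
  apply Real.sInf_nonneg
  rintro _ ⟨R, -, rfl⟩
  exact norm_nonneg _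

lemma singularValue_le_norm_sub (T : H →L[ℂ] H) {R : H →L[ℂ] H} {j : ℕ}
    (hR : (R : H →ₗ[ℂ] H).rank ≤ j) : singularValue T j ≤ ‖T - R‖ := by
  refine csInf_le ⟨0, ?_⟩ ⟨R, hR, rfl⟩
  rintro _ ⟨R', -, rfl⟩
  exact norm_nonneg _

lemma exists_norm_sub_lt_of_singularValue_lt {T : H →L[ℂ] H} {j : ℕ} {δ : ℝ}
    (h : singularValue T j < δ) :
    ∃ R : H →L[ℂ] H, (R : H →ₗ[ℂ] H).rank ≤ j ∧ ‖T - R‖ < δ := by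
  obtain ⟨_, ⟨R, hR, rfl⟩, hlt⟩ := exists_lt_of_csInf_lt (by exact ⟨_, 0, by simp, rfl⟩) h
  exact ⟨R, hR, hlt⟩

lemma le_singularValue {T : H →L[ℂ] H} {j : ℕ} {β : ℝ}
    (h : ∀ R : H →L[ℂ] H, (R : H →ₗ[ℂ] H).rank ≤ j → β ≤ ‖T - R‖) : β ≤ singularValue T j := by
  refine le_csInf ⟨_, 0, by simp, rfl⟩ ?_
  rintro _ ⟨R, hR, rfl⟩
  exact h R hR

lemma singularValue_antitone (T : H →L[ℂ] H) : Antitone (singularValue T) := fun _ _ hij =>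
  le_singularValue fun _ hR => singularValue_le_norm_sub T (hR.trans (by exact_mod_cast hij))

lemma finiteDimensional_range_of_rank_le {R : H →L[ℂ] H} {j : ℕ}
    (hR : (R : H →ₗ[ℂ] H).rank ≤ j) : FiniteDimensional ℂ (LinearMap.range (R : H →ₗ[ℂ] H)) :=
  Module.rank_lt_aleph0_iff.mp (hR.trans_lt Cardinal.natCast_lt_aleph0)

lemma le_singularValue_of_forall_mem_le_norm {T : H →L[ℂ] H} {k : ℕ} {β : ℝ}
    (V : Submodule ℂ H) (hV : k < Module.finrank ℂ V) (h : ∀ v ∈ V, β * ‖v‖ ≤ ‖T v‖) :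
    β ≤ singularValue T k := by
  refine le_singularValue fun R hR => ?_
  have := Module.finite_of_finrank_pos (k.zero_le.trans_lt hV)
  have := finiteDimensional_range_of_rank_le hR
  let φ : V →ₗ[ℂ] LinearMap.range (R : H →ₗ[ℂ] H) := (R : H →ₗ[ℂ] H).rangeRestrict ∘ₗ V.subtype
  have hφ : LinearMap.ker φ ≠ ⊥ :=
    LinearMap.ker_ne_bot_of_finrank_lt ((Module.finrank_le_of_rank_le hR).trans_lt hV)
  obtain ⟨v, hv, hv0⟩ := Submodule.exists_mem_ne_zero_of_ne_bot hφ
  have hRv : R (v : H) = 0 := congrArg Subtype.val (LinearMap.mem_ker.mp hv)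
  have hnorm : β * ‖(v : H)‖ ≤ ‖T - R‖ * ‖(v : H)‖ := calc
    β * ‖(v : H)‖ ≤ ‖(T - R) v‖ := by simpa [hRv] using h v v.2
    _ ≤ ‖T - R‖ * ‖(v : H)‖ := (T - R).le_opNorm v
  exact le_of_mul_le_mul_right hnorm (by simpa using hv0)

end SingularValue

section OrthonormalFamilies

variable {H : Type*} [NormedAddCommGroup H] [InnerProductSpace ℂ H]

lemma orthonormal_snoc {n : ℕ} {e : Fin n → H} {y : H} (he : Orthonormal ℂ e) (hy : ‖y‖ = 1)
    (hey : ∀ i, inner ℂ y (e i) = 0) : Orthonormal ℂ (Fin.snoc e y : Fin (n + 1) → H) := by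
  rw [Fin.snoc_eq_cons_rotate]
  exact (orthonormal_vecCons_iff.2 ⟨hy, hey, he⟩).comp _ (finRotate _).injective

-- Deflate: `T - (1 - Q) T (1 - P)` has rank at most `dim V + dim W` for the projections `P`, `Q`
-- onto `V`, `W`.
lemma singularValue_le_norm_compression (T : H →L[ℂ] H) (V W : Submodule ℂ H)
    [FiniteDimensional ℂ V] [FiniteDimensional ℂ W] :
    singularValue T (Module.finrank ℂ V + Module.finrank ℂ W) ≤
      ‖Wᗮ.starProjection * T * Vᗮ.starProjection‖ := by
  let R := W.starProjection * T * Vᗮ.starProjection + T * V.starProjection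
  have hR : (R : H →ₗ[ℂ] H).rank ≤ (Module.finrank ℂ V + Module.finrank ℂ W : ℕ) := by
    have hV : (T * V.starProjection : H →ₗ[ℂ] H).rank ≤ Module.finrank ℂ V := by
      refine (LinearMap.rank_comp_le_right _ _).trans_eq ?_
      rw [LinearMap.rank, Submodule.range_starProjection, Module.finrank_eq_rank]
    have hW : (W.starProjection * (T * Vᗮ.starProjection) : H →ₗ[ℂ] H).rank ≤
        Module.finrank ℂ W := by
      refine (LinearMap.rank_comp_le_left _ _).trans_eq ?_
      rw [LinearMap.rank, Submodule.range_starProjection, Module.finrank_eq_rank]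
    rw [Nat.cast_add, add_comm (Module.finrank ℂ V : Cardinal)]
    exact (LinearMap.rank_add_le _ _).trans (add_le_add hW hV)
  have hTR : Wᗮ.starProjection * T * Vᗮ.starProjection = T - R := by
    simp only [R, Submodule.starProjection_orthogonal']
    noncomm_ring
  exact hTR ▸ singularValue_le_norm_sub T hR

lemma exists_orthogonal_lt_norm_inner {T : H →L[ℂ] H} (V W : Submodule ℂ H)
    [FiniteDimensional ℂ V] [FiniteDimensional ℂ W] {c : ℝ} (hc : 0 ≤ c)
    (h : c < singularValue T (Module.finrank ℂ V + Module.finrank ℂ W)) :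
    ∃ y ∈ Vᗮ, ∃ w ∈ Wᗮ, ‖y‖ = 1 ∧ ‖w‖ = 1 ∧ c < ‖inner ℂ w (T y)‖ := by
  obtain ⟨x, hx, hcx⟩ := ContinuousLinearMap.exists_lt_apply_of_lt_opNorm _
    (h.trans_le (singularValue_le_norm_compression T V W))
  set y := Vᗮ.starProjection x
  set w := Wᗮ.starProjection (T y) with hw
  replace hcx : c < ‖w‖ := hcx
  have hy1 : ‖y‖ ≤ 1 := (Vᗮ.norm_starProjection_apply_le x).trans hx.le
  have hw0 : w ≠ 0 := norm_pos_iff.mp (hc.trans_lt hcx)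
  have hy0 : y ≠ 0 := fun h0 => hw0 (by rw [hw, h0, map_zero, map_zero])
  have hwTy : inner ℂ w (T y) = (‖w‖ : ℂ) ^ 2 := calc
    inner ℂ w (T y) = inner ℂ (Wᗮ.starProjection w) (T y) := by
      rw [Submodule.starProjection_eq_self_iff.mpr (Wᗮ.starProjection_apply_mem (T y))]
    _ = inner ℂ w w := Wᗮ.inner_starProjection_left_eq_right w (T y)
    _ = (‖w‖ : ℂ) ^ 2 := inner_self_eq_norm_sq_to_K w
  refine ⟨(‖y‖⁻¹ : ℂ) • y, Submodule.smul_mem _ _ (Vᗮ.starProjection_apply_mem x),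
    (‖w‖⁻¹ : ℂ) • w, Submodule.smul_mem _ _ (Wᗮ.starProjection_apply_mem (T y)),
    norm_smul_inv_norm hy0, norm_smul_inv_norm hw0, ?_⟩
  calc c < ‖w‖ := hcx
    _ ≤ ‖w‖ / ‖y‖ := le_div_self (norm_nonneg _) (norm_pos_iff.mpr hy0) hy1
    _ = ‖inner ℂ ((‖w‖⁻¹ : ℂ) • w) (T ((‖y‖⁻¹ : ℂ) • y))‖ := by
      rw [map_smul, inner_smul_left, inner_smul_right, hwTy]
      simp only [map_inv₀, Complex.conj_ofReal, norm_mul, norm_inv, norm_pow, Complex.norm_real,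
        norm_norm]
      field_simp [norm_ne_zero_iff.mpr hw0]

lemma exists_orthonormal_lt_norm_inner {T : H →L[ℂ] H} (n : ℕ) {c : ℕ → ℝ}
    (hc : ∀ i < n, 0 ≤ c i ∧ c i < singularValue T (2 * i)) :
    ∃ e g : Fin n → H, Orthonormal ℂ e ∧ Orthonormal ℂ g ∧
      ∀ i : Fin n, c i < ‖inner ℂ (g i) (T (e i))‖ := by
  induction n with
  | zero => exact ⟨0, 0, by simp [Orthonormal], by simp [Orthonormal], by simp⟩
  | succ n ih =>
    obtain ⟨e, g, he, hg, hT⟩ := ih fun i hi => hc i (by lia)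
    have hdim : Module.finrank ℂ (Submodule.span ℂ (Set.range e)) +
        Module.finrank ℂ (Submodule.span ℂ (Set.range g)) = 2 * n := by
      rw [finrank_span_eq_card he.linearIndependent, finrank_span_eq_card hg.linearIndependent,
        Fintype.card_fin, two_mul]
    have := FiniteDimensional.span_of_finite ℂ (Set.finite_range e)
    have := FiniteDimensional.span_of_finite ℂ (Set.finite_range g)
    obtain ⟨y, hy, w, hw, hy1, hw1, hyw⟩ := exists_orthogonal_lt_norm_inner
      (Submodule.span ℂ (Set.range e)) (Submodule.span ℂ (Set.range g)) (hc n n.lt_succ_self).1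
      (hdim ▸ (hc n n.lt_succ_self).2)
    refine ⟨Fin.snoc e y, Fin.snoc g w, orthonormal_snoc he hy1 fun i => ?_,
      orthonormal_snoc hg hw1 fun i => ?_, Fin.lastCases ?_ fun i => ?_⟩
    · exact Submodule.inner_left_of_mem_orthogonal (Submodule.subset_span (Set.mem_range_self i)) hy
    · exact Submodule.inner_left_of_mem_orthogonal (Submodule.subset_span (Set.mem_range_self i)) hw
    · simpa using hyw
    · simpa using hT i

lemma sum_rpow_singularValue_two_mul_le {T : H →L[ℂ] H} {p K : ℝ} (hp : 0 < p)
    (hK : ∀ n : ℕ, ∀ e g : Fin n → H, Orthonormal ℂ e → Orthonormal ℂ g →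
      ∑ i, ‖inner ℂ (g i) (T (e i))‖ ^ p ≤ K) (n : ℕ) :
    ∑ i ∈ Finset.range n, singularValue T (2 * i) ^ p ≤ K := by
  induction n with
  | zero => simpa using hK 0 0 0 (by simp [Orthonormal]) (by simp [Orthonormal])
  | succ n ih =>
    rcases (singularValue_nonneg T (2 * n)).eq_or_lt with hzero | hpos
    · rwa [Finset.sum_range_succ, ← hzero, Real.zero_rpow hp.ne', add_zero]
    have hscaled : ∀ θ ∈ Set.Ioo (0 : ℝ) 1,
        ∑ i ∈ Finset.range (n + 1), (θ * singularValue T (2 * i)) ^ p ≤ K := by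
      rintro θ ⟨hθ0, hθ1⟩
      obtain ⟨e, g, he, hg, hlt⟩ := exists_orthonormal_lt_norm_inner (T := T) (n + 1)
        (c := fun i => θ * singularValue T (2 * i)) fun i hi => by
          have hposi : 0 < singularValue T (2 * i) :=
            hpos.trans_le (singularValue_antitone T (by lia))
          exact ⟨by positivity, mul_lt_of_lt_one_left hposi hθ1⟩
      rw [Finset.sum_range]
      refine (Finset.sum_le_sum fun i _ => ?_).trans (hK _ e g he hg)
      have := singularValue_nonneg T (2 * i)
      have := (hlt i).le
      gcongr
    have hcont : Continuous fun θ : ℝ =>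
        ∑ i ∈ Finset.range (n + 1), (θ * singularValue T (2 * i)) ^ p := by
      fun_prop (disch := exact hp.le)
    have hlim := (hcont.tendsto 1).mono_left (nhdsWithin_le_nhds (s := Set.Iio 1))
    simp only [one_mul] at hlim
    exact le_of_tendsto hlim
      (Filter.mem_of_superset (Ioo_mem_nhdsLT one_pos) hscaled)

lemma sum_range_two_mul_rpow_singularValue_le (T : H →L[ℂ] H) {p : ℝ} (hp : 0 ≤ p) (n : ℕ) :
    ∑ j ∈ Finset.range (2 * n), singularValue T j ^ p ≤
      2 * ∑ i ∈ Finset.range n, singularValue T (2 * i) ^ p := by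
  induction n with
  | zero => simp
  | succ n ih =>
    have hodd : singularValue T (2 * n + 1) ^ p ≤ singularValue T (2 * n) ^ p :=
      Real.rpow_le_rpow (singularValue_nonneg _ _) (singularValue_antitone T (2 * n).le_succ) hp
    rw [mul_add_one, Finset.sum_range_succ, Finset.sum_range_succ, Finset.sum_range_succ]
    linarith

lemma sum_rpow_singularValue_le {T : H →L[ℂ] H} {p K : ℝ} (hp : 0 < p)
    (hK : ∀ n : ℕ, ∀ e g : Fin n → H, Orthonormal ℂ e → Orthonormal ℂ g →
      ∑ i, ‖inner ℂ (g i) (T (e i))‖ ^ p ≤ K) (n : ℕ) :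
    ∑ j ∈ Finset.range n, singularValue T j ^ p ≤ 2 * K := calc
  ∑ j ∈ Finset.range n, singularValue T j ^ p
      ≤ ∑ j ∈ Finset.range (2 * n), singularValue T j ^ p :=
    Finset.sum_le_sum_of_subset_of_nonneg (Finset.range_mono (by lia)) fun j _ _ =>
      Real.rpow_nonneg (singularValue_nonneg T j) p
  _ ≤ 2 * ∑ i ∈ Finset.range n, singularValue T (2 * i) ^ p :=
    sum_range_two_mul_rpow_singularValue_le T hp.le n
  _ ≤ 2 * K := by
    gcongr
    exact sum_rpow_singularValue_two_mul_le hp hK n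

end OrthonormalFamilies

section SpectralApproximation

open InnerProductSpace

variable {H : Type*} [NormedAddCommGroup H] [InnerProductSpace ℂ H]

lemma norm_sum_smul_sq {ι : Type*} [Fintype ι] {u : ι → H} (hu : Orthonormal ℂ u) (c : ι → ℂ) :
    ‖∑ i, c i • u i‖ ^ 2 = ∑ i, ‖c i‖ ^ 2 := by
  have h := hu.inner_sum c c Finset.univ
  simp only [inner_self_eq_norm_sq_to_K, Complex.conj_mul'] at h
  refine Complex.ofReal_injective ?_
  push_cast
  exact h

lemma sum_smul_rankOne_apply {ι : Type*} [Fintype ι] {u : ι → H} (hu : Orthonormal ℂ u)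
    (l : ι → ℂ) (i : ι) : (∑ m, l m • rankOne ℂ (u m) (u m)) (u i) = l i • u i := by
  classical
  simp [orthonormal_iff_ite.mp hu]

lemma abs_le_singularValue {K : H →L[ℂ] H} {n : ℕ} {u : Fin n → H} (hu : Orthonormal ℂ u)
    {l : Fin n → ℝ} (hl : Antitone fun m => |l m|)
    (hK : ∀ v ∈ Submodule.span ℂ (Set.range u),
      ‖(∑ m, (l m : ℂ) • rankOne ℂ (u m) (u m)) v‖ ≤ ‖K v‖) (m : Fin n) :
    |l m| ≤ singularValue K m := by
  let ι : Fin (m + 1) → Fin n := Fin.castLE m.2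
  have hι : Orthonormal ℂ (u ∘ ι) := hu.comp ι (Fin.castLE_injective m.2)
  refine le_singularValue_of_forall_mem_le_norm (Submodule.span ℂ (Set.range (u ∘ ι))) ?_
    fun v hv => ?_
  · simp [finrank_span_eq_card hι.linearIndependent]
  · refine le_trans ?_ (hK v (Submodule.span_mono (Set.range_comp_subset_range ι u) hv))
    obtain ⟨c, rfl⟩ := (Submodule.mem_span_range_iff_exists_fun ℂ).mp hv
    have hD : (∑ m, (l m : ℂ) • rankOne ℂ (u m) (u m)) (∑ i, c i • (u ∘ ι) i) =
        ∑ i, (c i * l (ι i)) • (u ∘ ι) i := by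
      simp only [map_sum, map_smul, Function.comp_apply, mul_smul,
        sum_smul_rankOne_apply hu (fun m => (l m : ℂ))]
    rw [hD]
    refine le_of_sq_le_sq ?_ (norm_nonneg _)
    rw [mul_pow, norm_sum_smul_sq hι, norm_sum_smul_sq hι, Finset.mul_sum]
    refine Finset.sum_le_sum fun i _ => ?_
    have hi : |l m| ≤ |l (ι i)| := hl (Fin.le_def.mpr (Nat.lt_succ_iff.mp i.2))
    rw [norm_mul, mul_pow, Complex.norm_real, Real.norm_eq_abs, mul_comm]
    gcongr

lemma exists_compression_eq_sum_rankOne [CompleteSpace H] {K : H →L[ℂ] H} (hK : IsSelfAdjoint K)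
    (V : Submodule ℂ H) [FiniteDimensional ℂ V] :
    ∃ (u : Fin (Module.finrank ℂ V) → H) (l : Fin (Module.finrank ℂ V) → ℝ), Orthonormal ℂ u ∧
      (∀ m, u m ∈ V) ∧ (Antitone fun m => |l m|) ∧
      V.starProjection * K * V.starProjection = ∑ m, (l m : ℂ) • rankOne ℂ (u m) (u m) := by
  let T : V →ₗ[ℂ] V := (V.orthogonalProjectionOnto : H →ₗ[ℂ] V) ∘ₗ (K : H →ₗ[ℂ] H) ∘ₗ V.subtype
  have hT : T.IsSymmetric := fun x y => by
    simpa [T] using ContinuousLinearMap.isSelfAdjoint_iff_isSymmetric.mp hK (x : H) (y : H)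
  let b := hT.eigenvectorBasis rfl
  let l := hT.eigenvalues rfl
  let τ := Tuple.sort fun m => -|l m|
  refine ⟨fun m => b (τ m), l ∘ τ, ?_, fun m => (b (τ m)).2, ?_, ?_⟩
  · exact (b.orthonormal.comp_linearIsometry V.subtypeₗᵢ).comp τ τ.injective
  · exact fun i j hij => neg_le_neg_iff.mp (Tuple.monotone_sort (fun m => -|l m|) hij)
  · ext x
    have hTb : ∀ m, T (b m) = (l m : ℂ) • b m := hT.apply_eigenvectorBasis rfl
    calc V.starProjection (K (V.starProjection x)) = T (V.orthogonalProjectionOnto x) := rfl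
      _ = ∑ m, (l m : ℂ) • rankOne ℂ (b m : H) (b m : H) x := by
        rw [← b.sum_repr (V.orthogonalProjectionOnto x)]
        simp only [map_sum, map_smul, hTb, b.repr_apply_apply, rankOne_apply]
        simp [smul_comm (l _ : ℂ)]
      _ = _ := by
        simp only [sum_apply, smul_apply, Function.comp_apply]
        exact (Equiv.sum_comp τ fun m => (l m : ℂ) • rankOne ℂ (b m : H) (b m : H) x).symm

lemma norm_sub_compression_le [CompleteSpace H] {K R : H →L[ℂ] H} (hK : IsSelfAdjoint K)
    {V : Submodule ℂ H} [V.HasOrthogonalProjection] (hV : LinearMap.range (R : H →ₗ[ℂ] H) ≤ V) :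
    ‖K - V.starProjection * K * V.starProjection‖ ≤ 2 * ‖K - R‖ := by
  have hVK : ‖Vᗮ.starProjection * K‖ ≤ ‖K - R‖ := by
    have hR : Vᗮ.starProjection * K = Vᗮ.starProjection * (K - R) := by
      ext x
      have : V.starProjection (R x) = R x :=
        Submodule.starProjection_eq_self_iff.mpr (hV ⟨x, rfl⟩)
      simp [this, Submodule.starProjection_orthogonal']
    rw [hR]
    exact (norm_mul_le _ _).trans (mul_le_of_le_one_left (norm_nonneg _) Vᗮ.starProjection_norm_le)
  have hKV : ‖K * Vᗮ.starProjection‖ ≤ ‖K - R‖ := by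
    rwa [← norm_star, star_mul, hK.star_eq, (isSelfAdjoint_starProjection Vᗮ).star_eq]
  have hsplit : K - V.starProjection * K * V.starProjection =
      Vᗮ.starProjection * K + V.starProjection * (K * Vᗮ.starProjection) := by
    simp only [Submodule.starProjection_orthogonal']
    noncomm_ring
  calc ‖K - V.starProjection * K * V.starProjection‖
      ≤ ‖Vᗮ.starProjection * K‖ + ‖V.starProjection * (K * Vᗮ.starProjection)‖ :=
        hsplit ▸ norm_add_le _ _
    _ ≤ ‖K - R‖ + 1 * ‖K - R‖ := by
        gcongr
        exact (norm_mul_le _ _).trans (by gcongr; exact V.starProjection_norm_le)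
    _ = 2 * ‖K - R‖ := by ring

lemma exists_norm_sub_sum_rankOne_le [CompleteSpace H] {K : H →L[ℂ] H} (hK : IsSelfAdjoint K)
    {j : ℕ} {δ : ℝ} (hj : singularValue K j < δ) :
    ∃ (n : ℕ) (u : Fin n → H) (l : Fin n → ℝ), Orthonormal ℂ u ∧
      (∀ m : Fin n, |l m| ≤ singularValue K m) ∧
      ‖K - ∑ m, (l m : ℂ) • rankOne ℂ (u m) (u m)‖ ≤ 2 * δ := by
  obtain ⟨R, hR, hKR⟩ := exists_norm_sub_lt_of_singularValue_lt hj
  have := finiteDimensional_range_of_rank_le hR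
  set V := LinearMap.range (R : H →ₗ[ℂ] H)
  obtain ⟨u, l, hu, huV, hl, hsum⟩ := exists_compression_eq_sum_rankOne hK V
  refine ⟨_, u, l, hu, abs_le_singularValue hu hl fun v hv => ?_, ?_⟩
  · have hvV : v ∈ V := Submodule.span_le.mpr (Set.range_subset_iff.mpr huV) hv
    calc ‖(∑ m, (l m : ℂ) • rankOne ℂ (u m) (u m)) v‖ = ‖V.starProjection (K v)‖ := by
          rw [← hsum]
          simp [Submodule.starProjection_eq_self_iff.mpr hvV]
      _ ≤ ‖K v‖ := V.norm_starProjection_apply_le _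
  · rw [← hsum]
    linarith [norm_sub_compression_le hK (le_refl V)]

end SpectralApproximation

section CauchyFormula

open Complex Filter Topology

/-- The integrand of the Cauchy integral of `F` against the kernel `R` along the boundary of the
strip `|Im z| ≤ a`, both boundary lines being parametrised by the real part and traversed with
the positive orientation. -/
noncomputable def stripIntegrand {E : Type*} [AddCommGroup E] [Module ℂ E] (F : ℂ → ℂ) (a : ℝ)
    (R : ℂ → E) (t : ℝ) : E :=
  F (t - a * I) • R (t - a * I) - F (t + a * I) • R (t + a * I)

variable {F : ℂ → ℂ} {a C : ℝ}

lemma abs_im_sub_mul_I (ha : 0 < a) (t : ℝ) : |((t : ℂ) - a * I).im| = a := by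
  simp [abs_of_pos ha]

lemma abs_im_add_mul_I (ha : 0 < a) (t : ℝ) : |((t : ℂ) + a * I).im| = a := by
  simp [abs_of_pos ha]

lemma sub_ofReal_ne_zero {z : ℂ} (hz : z.im ≠ 0) (x : ℝ) : z - x ≠ 0 := fun h =>
  hz (by simpa using congrArg Complex.im h)

lemma integral_stripIntegrand_one (ha : 0 < a) (x N : ℝ) :
    ∫ t in (-N)..N, stripIntegrand 1 a (fun z => (z - x)⁻¹) t =
      ((2 * (Real.arctan ((N - x) / a) + Real.arctan ((N + x) / a)) : ℝ) : ℂ) * I := by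
  have hkernel : ∀ t : ℝ, stripIntegrand 1 a (fun z => (z - x)⁻¹) t =
      ((2 * (a / (a ^ 2 + (t - x) ^ 2)) : ℝ) : ℂ) * I := fun t => by
    have hlow : (t : ℂ) - a * I - x ≠ 0 := sub_ofReal_ne_zero (by simpa using ha.ne') x
    have hupp : (t : ℂ) + a * I - x ≠ 0 := sub_ofReal_ne_zero (by simpa using ha.ne') x
    have hprod : ((t : ℂ) - a * I - x) * (t + a * I - x) = a ^ 2 + (t - x) ^ 2 := by
      linear_combination -(a : ℂ) ^ 2 * I_sq
    simp only [stripIntegrand, Pi.one_apply, one_smul]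
    rw [inv_sub_inv hlow hupp, hprod]
    push_cast
    ring
  simp only [hkernel]
  rw [intervalIntegral.integral_mul_const, intervalIntegral.integral_ofReal,
    intervalIntegral.integral_const_mul,
    intervalIntegral.integral_comp_sub_right (fun t => a / (a ^ 2 + t ^ 2)),
    integral_div_sq_add_sq, show (-N - x) / a = -((N + x) / a) by ring, Real.arctan_neg,
    sub_neg_eq_add]

lemma pi_div_two_sub_inv_le_arctan {y : ℝ} (hy : 0 < y) : Real.pi / 2 - y⁻¹ ≤ Real.arctan y := by
  have hle := Real.le_tan (Real.arctan_nonneg.mpr (inv_nonneg.mpr hy.le))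
    (Real.arctan_lt_pi_div_two y⁻¹)
  rw [Real.tan_arctan] at hle
  linarith [Real.arctan_inv_of_pos hy]

lemma abs_arctan_add_arctan_sub_pi_le (ha : 0 < a) {r N x : ℝ} (hx : |x| ≤ r) (hN : r < N) :
    |Real.arctan ((N - x) / a) + Real.arctan ((N + x) / a) - Real.pi| ≤ 2 * a / (N - r) := by
  have hbound : ∀ y, N - r ≤ y → |Real.pi / 2 - Real.arctan (y / a)| ≤ a / (N - r) := fun y hy => by
    have hNr : 0 < N - r := sub_pos.mpr hN
    rw [abs_of_pos (sub_pos.mpr (Real.arctan_lt_pi_div_two _))]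
    have harctan := pi_div_two_sub_inv_le_arctan (div_pos (hNr.trans_le hy) ha)
    have hinv : (y / a)⁻¹ ≤ a / (N - r) := by rw [inv_div]; gcongr
    linarith
  have hminus := abs_le.mp (hbound (N - x) (by linarith [le_abs_self x]))
  have hplus := abs_le.mp (hbound (N + x) (by linarith [neg_abs_le x]))
  rw [mul_div_assoc, abs_le]
  constructor <;> linarith [hminus.1, hminus.2, hplus.1, hplus.2]

lemma norm_dslope_le {x z : ℂ} {d : ℝ} (hx : ‖F x‖ ≤ C) (hz : ‖F z‖ ≤ C) (hd : 0 < d)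
    (hdz : d ≤ ‖z - x‖) : ‖dslope F x z‖ ≤ 2 * C / d := by
  have hne : z ≠ x := sub_ne_zero.mp (norm_pos_iff.mp (hd.trans_le hdz))
  have hC : 0 ≤ C := (norm_nonneg _).trans hx
  rw [dslope_of_ne _ hne, slope_def_field, norm_div]
  gcongr
  linarith [norm_sub_le (F z) (F x)]

lemma norm_integral_dslope_vertical_le (ha : 0 < a) (hC : ∀ z : ℂ, |z.im| ≤ a → ‖F z‖ ≤ C)
    {x d R : ℝ} (hd : 0 < d) (hR : d ≤ |R - x|) :
    ‖∫ y in (-a)..a, dslope F x (R + y * I)‖ ≤ 4 * a * C / d := by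
  rw [show 4 * a * C / d = 2 * C / d * |a - -a| by rw [abs_of_pos (by linarith)]; ring]
  refine intervalIntegral.norm_integral_le_of_norm_le_const fun y hy => ?_
  rw [Set.uIoc_of_le (neg_le_self ha.le)] at hy
  refine norm_dslope_le (hC x (by simpa using ha.le)) (hC _ ?_) hd (hR.trans ?_)
  · simpa using abs_le.mpr ⟨hy.1.le, hy.2⟩
  · simpa using abs_re_le_norm ((R : ℂ) + y * I - x)

lemma differentiableOn_dslope_strip (ha : 0 < a) (hF : DifferentiableOn ℂ F {z | |z.im| ≤ a})
    (x : ℝ) : DifferentiableOn ℂ (dslope F x) {z | |z.im| ≤ a} := by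
  refine (differentiableOn_dslope ?_).mpr hF
  exact (continuous_abs.comp continuous_im).continuousAt.eventually
    (Iic_mem_nhds (by simpa using ha))

-- Cauchy's theorem on the rectangle `[-N, N] × [-a, a]` leaves only the two short sides.
lemma norm_integral_stripIntegrand_dslope_le (ha : 0 < a)
    (hF : DifferentiableOn ℂ F {z | |z.im| ≤ a}) (hC : ∀ z : ℂ, |z.im| ≤ a → ‖F z‖ ≤ C)
    {r N x : ℝ} (hx : |x| ≤ r) (hN : r < N) :
    ‖∫ t in (-N)..N, stripIntegrand 1 a (dslope F x) t‖ ≤ 8 * a * C / (N - r) := by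
  have hdslope := differentiableOn_dslope_strip ha hF x
  have hrect := integral_boundary_rect_eq_zero_of_differentiableOn (dslope F x) ⟨-N, -a⟩ ⟨N, a⟩
    (hdslope.mono fun z hz => abs_le.mpr (by
      simpa [Set.uIcc_of_le (neg_le_self ha.le)] using (mem_reProdIm.mp hz).2))
  have hsides : ∫ t in (-N)..N, stripIntegrand 1 a (dslope F x) t =
      I * (∫ y in (-a)..a, dslope F x ((-N : ℝ) + y * I)) -
        I * ∫ y in (-a)..a, dslope F x (N + y * I) := by
    have hlow : IntervalIntegrable (fun t : ℝ => dslope F x (t - a * I)) MeasureTheory.volume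
        (-N) N := (hdslope.continuousOn.comp_continuous (by fun_prop) fun t =>
      (abs_im_sub_mul_I ha t).le).intervalIntegrable _ _
    have hupp : IntervalIntegrable (fun t : ℝ => dslope F x (t + a * I)) MeasureTheory.volume
        (-N) N := (hdslope.continuousOn.comp_continuous (by fun_prop) fun t =>
      (abs_im_add_mul_I ha t).le).intervalIntegrable _ _
    simp only [smul_eq_mul, ofReal_neg, neg_mul, ← sub_eq_add_neg] at hrect
    simp only [stripIntegrand, Pi.one_apply, one_smul]
    rw [intervalIntegral.integral_sub hlow hupp, ofReal_neg]
    linear_combination hrect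
  have hNr : 0 < N - r := sub_pos.mpr hN
  have hright := norm_integral_dslope_vertical_le ha hC hNr
    (show N - r ≤ |N - x| by linarith [le_abs_self (N - x), le_abs_self x])
  have hleft := norm_integral_dslope_vertical_le ha hC hNr
    (show N - r ≤ |-N - x| by linarith [neg_abs_le (-N - x), neg_abs_le x])
  calc _ ≤ 4 * a * C / (N - r) + 4 * a * C / (N - r) := by
        rw [hsides]
        refine (norm_sub_le _ _).trans ?_
        simpa only [norm_mul, norm_I, one_mul] using add_le_add hleft hright
    _ = 8 * a * C / (N - r) := by ring

lemma continuous_stripIntegrand {E : Type*} [NormedAddCommGroup E] [NormedSpace ℂ E] {R : ℂ → E}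
    (ha : 0 < a) (hF : ContinuousOn F {z | |z.im| ≤ a}) (hR : ContinuousOn R {z | |z.im| = a}) :
    Continuous (stripIntegrand F a R) :=
  ((hF.comp_continuous (by fun_prop) fun t => (abs_im_sub_mul_I ha t).le).smul
    (hR.comp_continuous (by fun_prop) (abs_im_sub_mul_I ha))).sub
  ((hF.comp_continuous (by fun_prop) fun t => (abs_im_add_mul_I ha t).le).smul
    (hR.comp_continuous (by fun_prop) (abs_im_add_mul_I ha)))

lemma norm_integral_stripIntegrand_one_sub_le (ha : 0 < a) {r N x : ℝ} (hx : |x| ≤ r)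
    (hN : r < N) : ‖(∫ t in (-N)..N, stripIntegrand 1 a (fun z => (z - x)⁻¹) t) -
      2 * Real.pi * I‖ ≤ 4 * a / (N - r) := by
  set θ := Real.arctan ((N - x) / a) + Real.arctan ((N + x) / a) with hθ
  calc _ = ‖(((2 * (θ - Real.pi) : ℝ) : ℂ) * I)‖ := by
        rw [integral_stripIntegrand_one ha, ← hθ]
        push_cast
        ring_nf
    _ = 2 * |θ - Real.pi| := by
        rw [norm_mul, norm_I, mul_one, norm_real, Real.norm_eq_abs, abs_mul, abs_two]
    _ ≤ 2 * (2 * a / (N - r)) := by gcongr; exact abs_arctan_add_arctan_sub_pi_le ha hx hN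
    _ = 4 * a / (N - r) := by ring

lemma stripIntegrand_inv_sub (ha : 0 < a) (x t : ℝ) :
    stripIntegrand F a (fun z => (z - x)⁻¹) t =
      stripIntegrand 1 a (dslope F x) t + F x * stripIntegrand 1 a (fun z => (z - x)⁻¹) t := by
  have hpoint : ∀ z : ℂ, |z.im| = a → F z * (z - x)⁻¹ = dslope F x z + F x * (z - x)⁻¹ :=
    fun z hz => by
      have hne : z ≠ x := sub_ne_zero.mp (sub_ofReal_ne_zero (abs_pos.mp (hz ▸ ha)) x)
      rw [dslope_of_ne _ hne, slope_def_field]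
      ring
  simp only [stripIntegrand, Pi.one_apply, smul_eq_mul, hpoint _ (abs_im_sub_mul_I ha t),
    hpoint _ (abs_im_add_mul_I ha t)]
  ring

lemma norm_integral_stripIntegrand_sub_le (ha : 0 < a)
    (hF : DifferentiableOn ℂ F {z | |z.im| ≤ a}) (hC : ∀ z : ℂ, |z.im| ≤ a → ‖F z‖ ≤ C)
    {r N x : ℝ} (hx : |x| ≤ r) (hN : r < N) :
    ‖(∫ t in (-N)..N, stripIntegrand F a (fun z => (z - x)⁻¹) t) - 2 * Real.pi * I * F x‖ ≤
      12 * a * C / (N - r) := by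
  have hcont_dslope : Continuous (stripIntegrand 1 a (dslope F x)) :=
    continuous_stripIntegrand ha continuousOn_const
      ((differentiableOn_dslope_strip ha hF x).continuousOn.mono fun z hz => hz.le)
  have hcont_kernel : Continuous (stripIntegrand 1 a fun z => (z - x)⁻¹) :=
    continuous_stripIntegrand ha continuousOn_const (ContinuousOn.inv₀ (by fun_prop) fun z hz =>
      sub_ofReal_ne_zero (abs_pos.mp (hz.symm ▸ ha)) x)
  have hFx : ‖F x‖ ≤ C := hC x (by simpa using ha.le)
  have hC0 : 0 ≤ C := (norm_nonneg _).trans hFx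
  calc _ = ‖(∫ t in (-N)..N, stripIntegrand 1 a (dslope F x) t) +
          F x * ((∫ t in (-N)..N, stripIntegrand 1 a (fun z => (z - x)⁻¹) t) -
            2 * Real.pi * I)‖ := by
        rw [intervalIntegral.integral_congr fun t _ => stripIntegrand_inv_sub ha x t,
          intervalIntegral.integral_add (hcont_dslope.intervalIntegrable _ _)
          ((hcont_kernel.const_mul _).intervalIntegrable _ _), intervalIntegral.integral_const_mul]
        congr 1
        ring
    _ ≤ 8 * a * C / (N - r) + C * (4 * a / (N - r)) := by
        refine (norm_add_le _ _).trans ?_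
        rw [norm_mul]
        gcongr
        · exact norm_integral_stripIntegrand_dslope_le ha hF hC hx hN
        · exact norm_integral_stripIntegrand_one_sub_le ha hx hN
    _ = 12 * a * C / (N - r) := by ring

end CauchyFormula

section Resolvent

open Complex Filter Topology

variable {𝔸 : Type*} [CStarAlgebra 𝔸] {A : 𝔸} {F : ℂ → ℂ} {a C : ℝ}

lemma sub_ne_zero_of_mem_spectrum (hA : IsSelfAdjoint A) {ζ z : ℂ} (hζ : ζ.im ≠ 0)
    (hz : z ∈ spectrum ℂ A) : ζ - z ≠ 0 :=
  hA.mem_spectrum_eq_re hz ▸ sub_ofReal_ne_zero hζ z.re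

lemma mem_resolventSet_of_im_ne_zero (hA : IsSelfAdjoint A) {ζ : ℂ} (hζ : ζ.im ≠ 0) :
    ζ ∈ resolventSet ℂ A :=
  not_not.mp fun h => hζ (hA.im_eq_zero_of_mem_spectrum h)

lemma continuousOn_inv_sub_spectrum (hA : IsSelfAdjoint A) {ζ : ℂ} (hζ : ζ.im ≠ 0) :
    ContinuousOn (fun z : ℂ => (ζ - z)⁻¹) (spectrum ℂ A) :=
  ContinuousOn.inv₀ (by fun_prop) fun _ hz => sub_ne_zero_of_mem_spectrum hA hζ hz

lemma resolvent_eq_cfc (hA : IsSelfAdjoint A) {ζ : ℂ} (hζ : ζ.im ≠ 0) :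
    resolvent A ζ = cfc (fun z : ℂ => (ζ - z)⁻¹) A := by
  have := hA.isStarNormal
  rw [cfc_inv _ A (fun _ hz => sub_ne_zero_of_mem_spectrum hA hζ hz) (by fun_prop), resolvent,
    cfc_sub _ _ A (by fun_prop) (by fun_prop), cfc_const ζ A, cfc_id' ℂ A]

lemma star_resolvent (hA : IsSelfAdjoint A) (ζ : ℂ) :
    star (resolvent A ζ) = resolvent A (starRingEnd ℂ ζ) := by
  rw [resolvent, resolvent, ← Ring.inverse_star, star_sub, hA.star_eq, ← algebraMap_star_comm]
  rfl

lemma continuousOn_resolvent (hA : IsSelfAdjoint A) :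
    ContinuousOn (resolvent A : ℂ → 𝔸) {ζ | ζ.im ≠ 0} := fun _ hζ =>
  (spectrum.hasDerivAt_resolvent_const_left
    (mem_resolventSet_of_im_ne_zero hA hζ)).continuousAt.continuousWithinAt

lemma cfc_stripIntegrand (hA : IsSelfAdjoint A) (ha : 0 < a) (t : ℝ) :
    cfc (fun z => stripIntegrand F a (fun ζ => (ζ - z)⁻¹) t) A =
      stripIntegrand F a (resolvent A) t := by
  have := hA.isStarNormal
  have hlow : ((t : ℂ) - a * I).im ≠ 0 := by simpa using ha.ne'
  have hupp : ((t : ℂ) + a * I).im ≠ 0 := by simpa using ha.ne'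
  have hcont_low := continuousOn_inv_sub_spectrum hA hlow
  have hcont_upp := continuousOn_inv_sub_spectrum hA hupp
  rw [stripIntegrand, resolvent_eq_cfc hA hlow, resolvent_eq_cfc hA hupp,
    ← cfc_smul _ _ A hcont_low, ← cfc_smul _ _ A hcont_upp]
  exact cfc_sub _ _ A (hcont_low.fun_const_smul _) (hcont_upp.fun_const_smul _)

lemma cfc_intervalIntegral [IsStarNormal A] {G : ℝ → ℂ → ℂ} {α β : ℝ} (hαβ : α ≤ β)
    (hG : ContinuousOn (Function.uncurry G) (Set.Icc α β ×ˢ spectrum ℂ A)) :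
    cfc (fun z => ∫ t in α..β, G t z) A = ∫ t in α..β, cfc (G t) A := by
  obtain ⟨D, hD⟩ := (isCompact_Icc.prod (spectrum.isCompact A)).exists_bound_of_continuousOn hG
  simp only [intervalIntegral.integral_of_le hαβ]
  refine cfc_setIntegral measurableSet_Ioc G (fun _ => D) A
    (hG.mono (Set.prod_mono_left Set.Ioc_subset_Icc_self))
    (MeasureTheory.ae_restrict_of_forall_mem measurableSet_Ioc fun t ht z hz =>
      hD (t, z) ⟨Set.Ioc_subset_Icc_self ht, hz⟩)
    (MeasureTheory.integrable_const D).hasFiniteIntegral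

lemma continuousOn_stripIntegrand_inv_sub (hA : IsSelfAdjoint A) (ha : 0 < a)
    (hF : ContinuousOn F {z | |z.im| ≤ a}) :
    ContinuousOn (fun q : ℝ × ℂ => stripIntegrand F a (fun ζ => (ζ - q.2)⁻¹) q.1)
      (Set.univ ×ˢ spectrum ℂ A) := by
  simp only [stripIntegrand]
  refine .fun_sub (.fun_smul ?_ (.fun_inv₀ ?_ ?_)) (.fun_smul ?_ (.fun_inv₀ ?_ ?_))
  · exact hF.comp (by fun_prop) fun q _ => (abs_im_sub_mul_I ha q.1).le
  · fun_prop
  · exact fun q hq => sub_ne_zero_of_mem_spectrum hA (by simpa using ha.ne') hq.2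
  · exact hF.comp (by fun_prop) fun q _ => (abs_im_add_mul_I ha q.1).le
  · fun_prop
  · exact fun q hq => sub_ne_zero_of_mem_spectrum hA (by simpa using ha.ne') hq.2

lemma tendstoUniformlyOn_integral_stripIntegrand (hA : IsSelfAdjoint A) (ha : 0 < a)
    (hF : DifferentiableOn ℂ F {z | |z.im| ≤ a}) (hC : ∀ z : ℂ, |z.im| ≤ a → ‖F z‖ ≤ C) :
    TendstoUniformlyOn
      (fun (N : ℝ) z => ∫ t in (-N)..N, stripIntegrand F a (fun ζ => (ζ - z)⁻¹) t)
      (fun z => 2 * Real.pi * I * F z.re) atTop (spectrum ℂ A) := by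
  obtain ⟨r, hr⟩ := (spectrum.isCompact (𝕜 := ℂ) A).isBounded.exists_norm_le
  have hdecay : Tendsto (fun N : ℝ => 12 * a * C / (N - r)) atTop (𝓝 0) :=
    (tendsto_atTop_add_const_right _ (-r) tendsto_id).const_div_atTop _
  refine Metric.tendstoUniformlyOn_iff.mpr fun ε hε => ?_
  filter_upwards [hdecay.eventually_lt_const hε, eventually_gt_atTop r] with N hNε hN z hz
  have hbound := norm_integral_stripIntegrand_sub_le ha hF hC
    ((abs_re_le_norm z).trans (hr z hz)) hN
  rw [← hA.mem_spectrum_eq_re hz] at hbound ⊢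
  rw [dist_comm, dist_eq_norm]
  exact hbound.trans_lt hNε

lemma tendsto_integral_stripIntegrand_resolvent (hA : IsSelfAdjoint A) (ha : 0 < a)
    (hF : DifferentiableOn ℂ F {z | |z.im| ≤ a}) (hC : ∀ z : ℂ, |z.im| ≤ a → ‖F z‖ ≤ C) :
    Tendsto (fun N : ℝ => ∫ t in (-N)..N, stripIntegrand F a (resolvent A) t) atTop
      (𝓝 ((2 * Real.pi * I : ℂ) • cfc (fun z : ℂ => F z.re) A)) := by
  have := hA.isStarNormal
  have hjoint := continuousOn_stripIntegrand_inv_sub hA ha hF.continuousOn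
  have hcont : ∀ N : ℝ, ContinuousOn
      (fun z => ∫ t in (-N)..N, stripIntegrand F a (fun ζ => (ζ - z)⁻¹) t) (spectrum ℂ A) :=
    fun N => by
      rw [continuousOn_iff_continuous_domRestrict]
      refine intervalIntegral.continuous_parametric_intervalIntegral_of_continuous' ?_ _ _
      exact hjoint.comp_continuous (f := fun q : spectrum ℂ A × ℝ => (q.2, (q.1 : ℂ)))
        (by fun_prop) fun q => ⟨Set.mem_univ _, q.1.2⟩
  have hF_re : ContinuousOn (fun z : ℂ => F z.re) (spectrum ℂ A) :=
    hF.continuousOn.comp (by fun_prop) fun z _ => by simpa using ha.le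
  have hlim := tendsto_cfc_fun (tendstoUniformlyOn_integral_stripIntegrand hA ha hF hC)
    (.of_forall hcont)
  rw [cfc_const_mul _ _ A hF_re] at hlim
  refine hlim.congr' ?_
  filter_upwards [eventually_ge_atTop 0] with N hN
  refine (cfc_intervalIntegral (G := fun t z => stripIntegrand F a (fun ζ => (ζ - z)⁻¹) t)
    (neg_le_self hN) (hjoint.mono (Set.prod_mono_left (Set.subset_univ _)))).trans ?_
  simp only [cfc_stripIntegrand hA ha]

end Resolvent

section ResolventWeight

open Complex Filter Topology MeasureTheory

lemma resolvent_sub_resolvent_eq_smul {R 𝔸 : Type*} [CommRing R] [Ring 𝔸] [Algebra R 𝔸] {A : 𝔸}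
    {ζ η : R} (hζ : ζ ∈ resolventSet R A) (hη : η ∈ resolventSet R A) :
    resolvent A ζ - resolvent A η = (η - ζ) • (resolvent A ζ * resolvent A η) := by
  rw [spectrum.mem_resolventSet_iff] at hζ hη
  calc resolvent A ζ - resolvent A η
      = resolvent A ζ * ((algebraMap R 𝔸 η - A) - (algebraMap R 𝔸 ζ - A)) * resolvent A η := by
        rw [mul_sub, sub_mul, mul_assoc, resolvent, resolvent, Ring.mul_inverse_cancel _ hη,
          Ring.inverse_mul_cancel _ hζ, mul_one, one_mul]
    _ = (η - ζ) • (resolvent A ζ * resolvent A η) := by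
        rw [sub_sub_sub_cancel_right, ← map_sub, Algebra.algebraMap_eq_smul_one, mul_smul_comm,
          mul_one, smul_mul_assoc]

variable {H : Type*} [NormedAddCommGroup H] [InnerProductSpace ℂ H] {A : H →L[ℂ] H}
  {F : ℂ → ℂ} {a C : ℝ}

/-- The squared matrix coefficient `‖⟪u, (z - A)⁻¹ v⟫‖²` of the resolvent of `A`, summed over the
two boundary points `z = t ± i a` of the strip `|Im z| ≤ a` with real part `t`. -/
noncomputable def resolventDensity (A : H →L[ℂ] H) (a : ℝ) (u v : H) (t : ℝ) : ℝ :=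
  ‖inner ℂ u (resolvent A ((t : ℂ) - a * I) v)‖ ^ 2 +
    ‖inner ℂ u (resolvent A ((t : ℂ) + a * I) v)‖ ^ 2

/-- The squared matrix coefficient of the resolvent of `A`, integrated over the boundary of the
strip `|Im z| ≤ a`. These weights form the matrix to which the Schur test is applied. -/
noncomputable def resolventWeight (A : H →L[ℂ] H) (a : ℝ) (u v : H) : ℝ :=
  ∫ t : ℝ, resolventDensity A a u v t

lemma resolventDensity_nonneg (u v : H) (t : ℝ) : 0 ≤ resolventDensity A a u v t := by
  unfold resolventDensity
  positivity

lemma resolventWeight_nonneg (u v : H) : 0 ≤ resolventWeight A a u v :=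
  integral_nonneg (resolventDensity_nonneg u v)

variable [CompleteSpace H]

lemma inner_resolvent_right (hA : IsSelfAdjoint A) (ζ : ℂ) (u v : H) :
    inner ℂ u (resolvent A ζ v) = inner ℂ (resolvent A (starRingEnd ℂ ζ) u) v := by
  rw [← star_resolvent hA, ContinuousLinearMap.star_eq_adjoint,
    ContinuousLinearMap.adjoint_inner_left]

lemma norm_resolvent_conj_apply (hA : IsSelfAdjoint A) (ζ : ℂ) (v : H) :
    ‖resolvent A (starRingEnd ℂ ζ) v‖ = ‖resolvent A ζ v‖ := by
  have hnormal : IsStarNormal (resolvent A ζ) := ⟨by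
    rw [star_resolvent hA]
    exact Commute.ringInverse_ringInverse
      ((Algebra.commute_algebraMap_left _ _).sub_left
        ((Algebra.commute_algebraMap_right _ _).sub_right (.refl A)))⟩
  rw [← star_resolvent hA]
  exact (ContinuousLinearMap.isStarNormal_iff_norm_eq_adjoint.mp hnormal v).symm

lemma conj_sub_mul_I (t : ℝ) : starRingEnd ℂ (t - a * I) = t + a * I := by
  simp

lemma conj_add_mul_I (t : ℝ) : starRingEnd ℂ (t + a * I) = t - a * I := by
  simp [sub_eq_add_neg]

lemma continuous_resolvent_add_mul_I (hA : IsSelfAdjoint A) (ha : 0 < a) :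
    Continuous fun t : ℝ => resolvent A ((t : ℂ) + a * I) :=
  (continuousOn_resolvent hA).comp_continuous (by fun_prop) fun _ => by simpa using ha.ne'

lemma continuous_resolvent_sub_mul_I (hA : IsSelfAdjoint A) (ha : 0 < a) :
    Continuous fun t : ℝ => resolvent A ((t : ℂ) - a * I) :=
  (continuousOn_resolvent hA).comp_continuous (by fun_prop) fun _ => by simpa using ha.ne'

lemma continuous_stripIntegrand_resolvent (hA : IsSelfAdjoint A) (ha : 0 < a)
    (hF : ContinuousOn F {z | |z.im| ≤ a}) : Continuous (stripIntegrand F a (resolvent A)) :=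
  continuous_stripIntegrand ha hF
    ((continuousOn_resolvent hA).mono fun _ hz => abs_pos.mp (hz.symm ▸ ha))

lemma tendsto_integral_inner_stripIntegrand_resolvent (hA : IsSelfAdjoint A) (ha : 0 < a)
    (hF : DifferentiableOn ℂ F {z | |z.im| ≤ a}) (hC : ∀ z : ℂ, |z.im| ≤ a → ‖F z‖ ≤ C)
    (u v : H) :
    Tendsto (fun N : ℝ => ∫ t in (-N)..N, inner ℂ u (stripIntegrand F a (resolvent A) t v)) atTop
      (𝓝 (2 * Real.pi * I * inner ℂ u (cfc (fun z : ℂ => F z.re) A v))) := by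
  let φ : (H →L[ℂ] H) →L[ℂ] ℂ := innerSL ℂ u ∘L ContinuousLinearMap.apply ℂ H v
  have hlim := (φ.continuous.tendsto _).comp
    (tendsto_integral_stripIntegrand_resolvent hA ha hF hC)
  rw [map_smul, smul_eq_mul] at hlim
  refine hlim.congr fun N => ?_
  exact (φ.intervalIntegral_comp_comm
    ((continuous_stripIntegrand_resolvent hA ha hF.continuousOn).intervalIntegrable _ _)).symm

lemma inner_stripIntegrand_one_resolvent (hA : IsSelfAdjoint A) (ha : 0 < a) (t : ℝ) (v : H) :
    inner ℂ v (stripIntegrand 1 a (resolvent A) t v) =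
      2 * a * I * ((‖resolvent A ((t : ℂ) + a * I) v‖ ^ 2 : ℝ) : ℂ) := by
  have hself : inner ℂ (resolvent A ((t : ℂ) + a * I) v) (resolvent A ((t : ℂ) + a * I) v) =
      ((‖resolvent A ((t : ℂ) + a * I) v‖ ^ 2 : ℝ) : ℂ) := by
    exact_mod_cast inner_self_eq_norm_sq_to_K (𝕜 := ℂ) _
  rw [stripIntegrand, Pi.one_apply, Pi.one_apply, one_smul, one_smul,
    resolvent_sub_resolvent_eq_smul
      (mem_resolventSet_of_im_ne_zero hA (by simpa using ha.ne'))
      (mem_resolventSet_of_im_ne_zero hA (by simpa using ha.ne')), smul_apply,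
    mul_apply_eq_comp, inner_smul_right, inner_resolvent_right hA, conj_sub_mul_I, hself]
  ring

-- The case `F = 1` of the Cauchy formula.
lemma tendsto_integral_norm_resolvent_sq (hA : IsSelfAdjoint A) (ha : 0 < a) (v : H) :
    Tendsto (fun N : ℝ => ∫ t in (-N)..N, ‖resolvent A ((t : ℂ) + a * I) v‖ ^ 2) atTop
      (𝓝 (Real.pi / a * ‖v‖ ^ 2)) := by
  have hlim := tendsto_integral_inner_stripIntegrand_resolvent (F := 1) (C := 1) hA ha
    (differentiableOn_const _) (fun z _ => by simp) v v
  have := hA.isStarNormal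
  have hself : inner ℂ v v = ((‖v‖ ^ 2 : ℝ) : ℂ) := by
    exact_mod_cast inner_self_eq_norm_sq_to_K (𝕜 := ℂ) v
  simp only [inner_stripIntegrand_one_resolvent hA ha, intervalIntegral.integral_const_mul,
    intervalIntegral.integral_ofReal, Pi.one_apply, cfc_const_one ℂ A,
    one_apply_eq_self, hself] at hlim
  have haI : (2 * a * I : ℂ) ≠ 0 := by simp [ha.ne']
  have hvalue : (2 * a * I : ℂ)⁻¹ * (2 * Real.pi * I * ((‖v‖ ^ 2 : ℝ) : ℂ)) =
      ((Real.pi / a * ‖v‖ ^ 2 : ℝ) : ℂ) := by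
    push_cast
    field_simp
  rw [← tendsto_ofReal_iff, ← hvalue]
  exact (hlim.const_mul _).congr fun N => inv_mul_cancel_left₀ haI _

lemma integrable_norm_resolvent_add_sq (hA : IsSelfAdjoint A) (ha : 0 < a) (v : H) :
    Integrable fun t : ℝ => ‖resolvent A ((t : ℂ) + a * I) v‖ ^ 2 := by
  have hcont : Continuous fun t : ℝ => ‖resolvent A ((t : ℂ) + a * I) v‖ ^ 2 := by
    have := continuous_resolvent_add_mul_I hA ha
    fun_prop
  refine integrable_of_intervalIntegral_norm_tendsto (Real.pi / a * ‖v‖ ^ 2)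
    (fun N => hcont.integrableOn_Ioc) tendsto_neg_atTop_atBot tendsto_id ?_
  simpa using tendsto_integral_norm_resolvent_sq hA ha v

lemma integral_norm_resolvent_add_sq (hA : IsSelfAdjoint A) (ha : 0 < a) (v : H) :
    ∫ t : ℝ, ‖resolvent A ((t : ℂ) + a * I) v‖ ^ 2 = Real.pi / a * ‖v‖ ^ 2 :=
  tendsto_nhds_unique (intervalIntegral_tendsto_integral
    (integrable_norm_resolvent_add_sq hA ha v) tendsto_neg_atTop_atBot tendsto_id)
    (tendsto_integral_norm_resolvent_sq hA ha v)

lemma norm_resolvent_sub_mul_I_apply (hA : IsSelfAdjoint A) (t : ℝ) (v : H) :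
    ‖resolvent A ((t : ℂ) - a * I) v‖ = ‖resolvent A ((t : ℂ) + a * I) v‖ := by
  rw [← conj_add_mul_I, norm_resolvent_conj_apply hA]

lemma resolventWeight_comm (hA : IsSelfAdjoint A) (u v : H) :
    resolventWeight A a u v = resolventWeight A a v u := by
  have hswap : ∀ (ζ : ℂ), ‖inner ℂ u (resolvent A ζ v)‖ =
      ‖inner ℂ v (resolvent A (starRingEnd ℂ ζ) u)‖ := fun ζ => by
    rw [inner_resolvent_right hA, norm_inner_symm]
  simp only [resolventWeight, resolventDensity, hswap, conj_sub_mul_I, conj_add_mul_I]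
  simp only [add_comm]

lemma sum_resolventDensity_le (hA : IsSelfAdjoint A) {ι : Type*} [Fintype ι] {u : ι → H}
    (hu : Orthonormal ℂ u) (v : H) (t : ℝ) :
    ∑ m, resolventDensity A a (u m) v t ≤ 2 * ‖resolvent A ((t : ℂ) + a * I) v‖ ^ 2 := by
  simp only [resolventDensity, Finset.sum_add_distrib, two_mul]
  refine add_le_add ?_ (hu.sum_inner_products_le _)
  rw [← norm_resolvent_sub_mul_I_apply hA]
  exact hu.sum_inner_products_le _

lemma continuous_resolventDensity (hA : IsSelfAdjoint A) (ha : 0 < a) (u v : H) :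
    Continuous (resolventDensity A a u v) := by
  have hupp := continuous_resolvent_add_mul_I hA ha
  have hlow := continuous_resolvent_sub_mul_I hA ha
  unfold resolventDensity
  fun_prop

lemma resolventDensity_le (hA : IsSelfAdjoint A) (u v : H) (t : ℝ) :
    resolventDensity A a u v t ≤ ‖u‖ ^ 2 * (2 * ‖resolvent A ((t : ℂ) + a * I) v‖ ^ 2) := by
  have hlow := norm_inner_le_norm (𝕜 := ℂ) u (resolvent A ((t : ℂ) - a * I) v)
  have hupp := norm_inner_le_norm (𝕜 := ℂ) u (resolvent A ((t : ℂ) + a * I) v)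
  rw [norm_resolvent_sub_mul_I_apply hA] at hlow
  calc resolventDensity A a u v t
      ≤ (‖u‖ * ‖resolvent A ((t : ℂ) + a * I) v‖) ^ 2 +
        (‖u‖ * ‖resolvent A ((t : ℂ) + a * I) v‖) ^ 2 := by unfold resolventDensity; gcongr
    _ = ‖u‖ ^ 2 * (2 * ‖resolvent A ((t : ℂ) + a * I) v‖ ^ 2) := by ring

lemma integrable_resolventDensity (hA : IsSelfAdjoint A) (ha : 0 < a) (u v : H) :
    Integrable (resolventDensity A a u v) := by
  refine (((integrable_norm_resolvent_add_sq hA ha v).const_mul 2).const_mul (‖u‖ ^ 2)).mono'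
    (continuous_resolventDensity hA ha u v).aestronglyMeasurable (.of_forall fun t => ?_)
  rw [Real.norm_of_nonneg (resolventDensity_nonneg u v t)]
  exact resolventDensity_le hA u v t

lemma sum_resolventWeight_le (hA : IsSelfAdjoint A) (ha : 0 < a) {ι : Type*} [Fintype ι]
    {u : ι → H} (hu : Orthonormal ℂ u) (v : H) :
    ∑ m, resolventWeight A a (u m) v ≤ 2 * Real.pi / a * ‖v‖ ^ 2 := calc
  ∑ m, resolventWeight A a (u m) v = ∫ t : ℝ, ∑ m, resolventDensity A a (u m) v t :=
    (integral_finsetSum _ fun m _ => integrable_resolventDensity hA ha (u m) v).symm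
  _ ≤ ∫ t : ℝ, 2 * ‖resolvent A ((t : ℂ) + a * I) v‖ ^ 2 :=
    integral_mono (integrable_finsetSum _ fun m _ => integrable_resolventDensity hA ha (u m) v)
      ((integrable_norm_resolvent_add_sq hA ha v).const_mul 2) (sum_resolventDensity_le hA hu v)
  _ = 2 * Real.pi / a * ‖v‖ ^ 2 := by
    rw [integral_const_mul, integral_norm_resolvent_add_sq hA ha]
    ring

end ResolventWeight

section DoubleOperatorIntegral

open Complex Filter Topology MeasureTheory InnerProductSpace

lemma norm_le_integral_of_tendsto {E : Type*} [NormedAddCommGroup E] [NormedSpace ℝ E]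
    {h : ℝ → E} {φ : ℝ → ℝ} {L : E} (hφ : Integrable φ) (hle : ∀ t, ‖h t‖ ≤ φ t)
    (hlim : Tendsto (fun N : ℝ => ∫ t in (-N)..N, h t) atTop (𝓝 L)) : ‖L‖ ≤ ∫ t, φ t := by
  refine le_of_tendsto hlim.norm ?_
  filter_upwards [eventually_ge_atTop 0] with N hN
  calc ‖∫ t in (-N)..N, h t‖ ≤ ∫ t in (-N)..N, φ t :=
        intervalIntegral.norm_integral_le_of_norm_le (neg_le_self hN) (.of_forall fun t _ => hle t)
          hφ.intervalIntegrable
    _ ≤ ∫ t, φ t := by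
        rw [intervalIntegral.integral_of_le (neg_le_self hN)]
        exact setIntegral_le_integral hφ (.of_forall fun t => (norm_nonneg _).trans (hle t))

variable {H : Type*} [NormedAddCommGroup H] [InnerProductSpace ℂ H] {ι : Type*} [Fintype ι]

lemma norm_inner_apply_le_of_norm_sub_sum_rankOne_le {K : H →L[ℂ] H} {u : ι → H} {l : ι → ℝ}
    {δ : ℝ} (hK : ‖K - ∑ m, (l m : ℂ) • rankOne ℂ (u m) (u m)‖ ≤ δ) (x y : H) :
    ‖inner ℂ x (K y)‖ ≤ ∑ m, |l m| / 2 * (‖inner ℂ (u m) x‖ ^ 2 + ‖inner ℂ (u m) y‖ ^ 2) +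
      δ / 2 * (‖x‖ ^ 2 + ‖y‖ ^ 2) := by
  set D := ∑ m, (l m : ℂ) • rankOne ℂ (u m) (u m) with hD
  have hsplit : inner ℂ x (K y) =
      ∑ m, (l m : ℂ) * (inner ℂ (u m) y * inner ℂ x (u m)) + inner ℂ x ((K - D) y) := by
    simp [hD]
  have herror : ‖inner ℂ x ((K - D) y)‖ ≤ δ / 2 * (‖x‖ ^ 2 + ‖y‖ ^ 2) := calc
    ‖inner ℂ x ((K - D) y)‖ ≤ ‖x‖ * (δ * ‖y‖) :=
      (norm_inner_le_norm _ _).trans (by gcongr; exact (K - D).le_of_opNorm_le hK y)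
    _ ≤ δ / 2 * (‖x‖ ^ 2 + ‖y‖ ^ 2) := by
      nlinarith [two_mul_le_add_sq ‖x‖ ‖y‖, (norm_nonneg _).trans hK]
  rw [hsplit]
  refine (norm_add_le _ _).trans (add_le_add (norm_sum_le_of_le _ fun m _ => ?_) herror)
  rw [norm_mul, norm_mul, norm_real, Real.norm_eq_abs, norm_inner_symm x (u m)]
  nlinarith [two_mul_le_add_sq ‖inner ℂ (u m) x‖ ‖inner ℂ (u m) y‖, abs_nonneg (l m)]

variable [CompleteSpace H] {A B : H →L[ℂ] H} {F : ℂ → ℂ} {a C : ℝ}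

lemma inner_resolvent_sub_resolvent (hA : IsSelfAdjoint A) (hB : IsSelfAdjoint B) {ζ : ℂ}
    (hζ : ζ.im ≠ 0) (g e : H) :
    inner ℂ g ((resolvent A ζ - resolvent B ζ) e) =
      inner ℂ (resolvent A (starRingEnd ℂ ζ) g) ((A - B) (resolvent B ζ e)) := by
  rw [spectrum.resolvent_sub_resolvent (mem_resolventSet_of_im_ne_zero hA hζ)
    (mem_resolventSet_of_im_ne_zero hB hζ), mul_apply_eq_comp, mul_apply_eq_comp,
    inner_resolvent_right hA]

lemma norm_inner_stripIntegrand_sub_le (hA : IsSelfAdjoint A) (hB : IsSelfAdjoint B) (ha : 0 < a)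
    (hC : ∀ z : ℂ, |z.im| ≤ a → ‖F z‖ ≤ C) {u : ι → H} {l : ι → ℝ} {δ : ℝ}
    (hAB : ‖(A - B) - ∑ m, (l m : ℂ) • rankOne ℂ (u m) (u m)‖ ≤ δ) (g e : H) (t : ℝ) :
    ‖inner ℂ g (stripIntegrand F a (resolvent A) t e) -
        inner ℂ g (stripIntegrand F a (resolvent B) t e)‖ ≤
      C * (∑ m, |l m| / 2 * (resolventDensity A a (u m) g t + resolventDensity B a (u m) e t) +
        δ * (‖resolvent A ((t : ℂ) + a * I) g‖ ^ 2 + ‖resolvent B ((t : ℂ) + a * I) e‖ ^ 2)) := by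
  set zlow : ℂ := t - a * I with hzlow
  set zupp : ℂ := t + a * I with hzupp
  have hsplit : inner ℂ g (stripIntegrand F a (resolvent A) t e) -
      inner ℂ g (stripIntegrand F a (resolvent B) t e) =
      F zlow * inner ℂ g ((resolvent A zlow - resolvent B zlow) e) -
        F zupp * inner ℂ g ((resolvent A zupp - resolvent B zupp) e) := by
    simp only [stripIntegrand, ← hzlow, ← hzupp, sub_apply, smul_apply, inner_sub_right,
      inner_smul_right]
    ring
  have hterm : ∀ {z : ℂ}, |z.im| = a → ‖F z * inner ℂ g ((resolvent A z - resolvent B z) e)‖ ≤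
      C * (∑ m, |l m| / 2 * (‖inner ℂ (u m) (resolvent A (starRingEnd ℂ z) g)‖ ^ 2 +
        ‖inner ℂ (u m) (resolvent B z e)‖ ^ 2) +
        δ / 2 * (‖resolvent A z g‖ ^ 2 + ‖resolvent B z e‖ ^ 2)) := fun {z} hz => by
    have hFz : ‖F z‖ ≤ C := hC z hz.le
    have := (norm_nonneg _).trans hFz
    rw [inner_resolvent_sub_resolvent hA hB (abs_pos.mp (hz ▸ ha)), norm_mul,
      ← norm_resolvent_conj_apply hA z]
    gcongr
    exact norm_inner_apply_le_of_norm_sub_sum_rankOne_le hAB _ _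
  have hlow := hterm (abs_im_sub_mul_I ha t)
  have hupp := hterm (abs_im_add_mul_I ha t)
  rw [conj_sub_mul_I, norm_resolvent_sub_mul_I_apply hA, norm_resolvent_sub_mul_I_apply hB] at hlow
  rw [conj_add_mul_I] at hupp
  rw [hsplit]
  refine (norm_sub_le _ _).trans ((add_le_add hlow hupp).trans_eq ?_)
  simp only [resolventDensity, ← hzlow, ← hzupp, mul_add, Finset.sum_add_distrib]
  ring

lemma tendsto_integral_inner_stripIntegrand_sub (hA : IsSelfAdjoint A) (hB : IsSelfAdjoint B)
    (ha : 0 < a) (hF : DifferentiableOn ℂ F {z | |z.im| ≤ a})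
    (hC : ∀ z : ℂ, |z.im| ≤ a → ‖F z‖ ≤ C) (g e : H) :
    Tendsto (fun N : ℝ => ∫ t in (-N)..N, (inner ℂ g (stripIntegrand F a (resolvent A) t e) -
        inner ℂ g (stripIntegrand F a (resolvent B) t e))) atTop
      (𝓝 (2 * Real.pi * I *
        inner ℂ g ((cfc (fun z : ℂ => F z.re) A - cfc (fun z : ℂ => F z.re) B) e))) := by
  rw [sub_apply, inner_sub_right, mul_sub]
  refine ((tendsto_integral_inner_stripIntegrand_resolvent hA ha hF hC g e).sub
    (tendsto_integral_inner_stripIntegrand_resolvent hB ha hF hC g e)).congr fun N => ?_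
  have hcontA := continuous_stripIntegrand_resolvent hA ha hF.continuousOn
  have hcontB := continuous_stripIntegrand_resolvent hB ha hF.continuousOn
  refine (intervalIntegral.integral_sub ?_ ?_).symm <;>
    exact Continuous.intervalIntegrable (by fun_prop) _ _

lemma norm_inner_cfc_sub_cfc_le (hA : IsSelfAdjoint A) (hB : IsSelfAdjoint B) (ha : 0 < a)
    (hF : DifferentiableOn ℂ F {z | |z.im| ≤ a}) (hC : ∀ z : ℂ, |z.im| ≤ a → ‖F z‖ ≤ C)
    {u : ι → H} {l : ι → ℝ} {δ : ℝ}
    (hAB : ‖(A - B) - ∑ m, (l m : ℂ) • rankOne ℂ (u m) (u m)‖ ≤ δ) (g e : H) :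
    ‖inner ℂ g ((cfc (fun z : ℂ => F z.re) A - cfc (fun z : ℂ => F z.re) B) e)‖ ≤
      ∑ m, C / (4 * Real.pi) * (resolventWeight A a (u m) g + resolventWeight B a (u m) e) * |l m| +
        C / a * δ * ((‖g‖ ^ 2 + ‖e‖ ^ 2) / 2) := by
  have hdensityA := fun m => integrable_resolventDensity hA ha (u m) g
  have hdensityB := fun m => integrable_resolventDensity hB ha (u m) e
  have hnormA := integrable_norm_resolvent_add_sq hA ha g
  have hnormB := integrable_norm_resolvent_add_sq hB ha e
  have hterm : ∀ m ∈ Finset.univ, Integrable fun t =>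
      |l m| / 2 * (resolventDensity A a (u m) g t + resolventDensity B a (u m) e t) := fun m _ =>
    ((hdensityA m).fun_add (hdensityB m)).const_mul _
  have hsum := integrable_finsetSum _ hterm
  have herror := (hnormA.fun_add hnormB).const_mul δ
  have hmajorant := norm_le_integral_of_tendsto ((hsum.fun_add herror).const_mul C)
    (norm_inner_stripIntegrand_sub_le hA hB ha hC hAB g e)
    (tendsto_integral_inner_stripIntegrand_sub hA hB ha hF hC g e)
  have hnorm : ‖(2 * Real.pi * I : ℂ)‖ = 2 * Real.pi := by simp [Real.pi_nonneg]
  rw [norm_mul, hnorm, ← le_div_iff₀' Real.two_pi_pos] at hmajorant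
  refine hmajorant.trans_eq ?_
  rw [integral_const_mul, integral_add hsum herror, integral_finsetSum _ hterm, integral_const_mul,
    integral_add hnormA hnormB, integral_norm_resolvent_add_sq hA ha,
    integral_norm_resolvent_add_sq hB ha]
  simp only [integral_const_mul, integral_add (hdensityA _) (hdensityB _), resolventWeight]
  rw [mul_add, add_div, Finset.mul_sum, Finset.sum_div]
  congr 1
  · refine Finset.sum_congr rfl fun m _ => ?_
    field_simp
    ring
  · field_simp

end DoubleOperatorIntegral

section SchurTest

variable {ι κ : Type*} [Fintype ι] [Fintype κ] {w : ι → κ → ℝ} {x : κ → ℝ} {Q p : ℝ}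

lemma rpow_sum_mul_le {w : κ → ℝ} (hw : ∀ k, 0 ≤ w k) (hx : ∀ k, 0 ≤ x k) (hp : 1 ≤ p)
    (hsum : ∑ k, w k ≤ Q) : (∑ k, w k * x k) ^ p ≤ Q ^ (p - 1) * ∑ k, w k * x k ^ p := by
  have hp0 : 0 < p := one_pos.trans_le hp
  have hQ : 0 ≤ Q := (Finset.sum_nonneg fun k _ => hw k).trans hsum
  have hmoment : 0 ≤ ∑ k, w k * x k ^ p :=
    Finset.sum_nonneg fun k _ => mul_nonneg (hw k) (Real.rpow_nonneg (hx k) p)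
  have hholder : ∑ k, w k * x k ≤ Q ^ (1 - p⁻¹) * (∑ k, w k * x k ^ p) ^ p⁻¹ := by
    refine (Real.inner_le_weight_mul_Lp_of_nonneg _ hp w x hw hx).trans ?_
    have := sub_nonneg.mpr (inv_le_one_of_one_le₀ hp)
    have := Finset.sum_nonneg fun k (_ : k ∈ Finset.univ) => hw k
    gcongr
  calc (∑ k, w k * x k) ^ p ≤ (Q ^ (1 - p⁻¹) * (∑ k, w k * x k ^ p) ^ p⁻¹) ^ p := by
        have := Finset.sum_nonneg fun k (_ : k ∈ Finset.univ) => mul_nonneg (hw k) (hx k)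
        gcongr
    _ = Q ^ (p - 1) * ∑ k, w k * x k ^ p := by
        rw [Real.mul_rpow (by positivity) (by positivity), ← Real.rpow_mul hQ,
          Real.rpow_inv_rpow hmoment hp0.ne', sub_mul, inv_mul_cancel₀ hp0.ne', one_mul]

lemma sum_rpow_sum_mul_le (hw : ∀ i k, 0 ≤ w i k) (hx : ∀ k, 0 ≤ x k) (hp : 1 ≤ p) (hQ : 0 < Q)
    (hrow : ∀ i, ∑ k, w i k ≤ Q) (hcol : ∀ k, ∑ i, w i k ≤ Q) :
    ∑ i, (∑ k, w i k * x k) ^ p ≤ Q ^ p * ∑ k, x k ^ p := calc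
  ∑ i, (∑ k, w i k * x k) ^ p ≤ ∑ i, Q ^ (p - 1) * ∑ k, w i k * x k ^ p :=
    Finset.sum_le_sum fun i _ => rpow_sum_mul_le (hw i) hx hp (hrow i)
  _ = Q ^ (p - 1) * ∑ k, (∑ i, w i k) * x k ^ p := by
    rw [← Finset.mul_sum, Finset.sum_comm]
    simp only [Finset.sum_mul]
  _ ≤ Q ^ (p - 1) * ∑ k, Q * x k ^ p := by
    gcongr with k
    · exact Real.rpow_nonneg (hx k) p
    · exact hcol k
  _ = Q ^ p * ∑ k, x k ^ p := by
    rw [← Finset.mul_sum, ← mul_assoc, ← Real.rpow_add_one hQ.ne', sub_add_cancel]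

end SchurTest

section SchattenEstimate

open Filter Topology InnerProductSpace

variable {H : Type*} [NormedAddCommGroup H] [InnerProductSpace ℂ H]

lemma exists_singularValue_lt {T : H →L[ℂ] H} {p : ℝ} (hp : 0 < p)
    (hT : Summable fun j => singularValue T j ^ p) {δ : ℝ} (hδ : 0 < δ) :
    ∃ j, singularValue T j < δ := by
  obtain ⟨j, hj⟩ :=
    (hT.tendsto_atTop_zero.eventually_lt_const (Real.rpow_pos_of_pos hδ p)).exists
  exact ⟨j, (Real.rpow_lt_rpow_iff (singularValue_nonneg T j) hδ.le hp).mp hj⟩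

variable [CompleteSpace H] {A B : H →L[ℂ] H} {F : ℂ → ℂ} {a C p : ℝ}

lemma sum_resolventWeight_add_le (hA : IsSelfAdjoint A) (hB : IsSelfAdjoint B) (ha : 0 < a)
    (hC : 0 ≤ C) {ι : Type*} [Fintype ι] {x y : ι → H} (hx : Orthonormal ℂ x)
    (hy : Orthonormal ℂ y) {v w : H} (hv : ‖v‖ = 1) (hw : ‖w‖ = 1) :
    ∑ i, C / (4 * Real.pi) * (resolventWeight A a (x i) v + resolventWeight B a (y i) w) ≤
      C / a := by
  have hsumA := sum_resolventWeight_le hA ha hx v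
  have hsumB := sum_resolventWeight_le hB ha hy w
  rw [hv, one_pow, mul_one] at hsumA
  rw [hw, one_pow, mul_one] at hsumB
  rw [← Finset.mul_sum, Finset.sum_add_distrib]
  calc C / (4 * Real.pi) * (∑ i, resolventWeight A a (x i) v + ∑ i, resolventWeight B a (y i) w)
      ≤ C / (4 * Real.pi) * (2 * Real.pi / a + 2 * Real.pi / a) := by gcongr
    _ = C / a := by
      field_simp
      ring

lemma sum_rpow_max_norm_inner_cfc_sub_cfc_sub_le (hA : IsSelfAdjoint A) (hB : IsSelfAdjoint B)
    (ha : 0 < a) (hC0 : 0 < C) (hF : DifferentiableOn ℂ F {z | |z.im| ≤ a})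
    (hC : ∀ z : ℂ, |z.im| ≤ a → ‖F z‖ ≤ C) (hp : 1 ≤ p) {ι κ : Type*} [Fintype ι] [Fintype κ]
    {u : ι → H} {l : ι → ℝ} {δ : ℝ} (hu : Orthonormal ℂ u)
    (hAB : ‖(A - B) - ∑ m, (l m : ℂ) • rankOne ℂ (u m) (u m)‖ ≤ δ)
    {e g : κ → H} (he : Orthonormal ℂ e) (hg : Orthonormal ℂ g) :
    ∑ i, (max (‖inner ℂ (g i) ((cfc (fun z : ℂ => F z.re) A - cfc (fun z : ℂ => F z.re) B)
        (e i))‖ - C / a * δ) 0) ^ p ≤ (C / a) ^ p * ∑ m, |l m| ^ p := by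
  let w : κ → ι → ℝ := fun i m =>
    C / (4 * Real.pi) * (resolventWeight A a (u m) (g i) + resolventWeight B a (u m) (e i))
  have hw : ∀ i m, 0 ≤ w i m := fun i m => mul_nonneg (by positivity)
    (add_nonneg (resolventWeight_nonneg _ _) (resolventWeight_nonneg _ _))
  have hrow : ∀ i, ∑ m, w i m ≤ C / a := fun i =>
    sum_resolventWeight_add_le hA hB ha hC0.le hu hu (hg.1 i) (he.1 i)
  have hcol : ∀ m, ∑ i, w i m ≤ C / a := fun m => by
    simp only [w, resolventWeight_comm hA (u m), resolventWeight_comm hB (u m)]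
    exact sum_resolventWeight_add_le hA hB ha hC0.le hg he (hu.1 m) (hu.1 m)
  refine (Finset.sum_le_sum fun i _ => ?_).trans
    (sum_rpow_sum_mul_le hw (fun m => abs_nonneg (l m)) hp (by positivity) hrow hcol)
  refine Real.rpow_le_rpow (le_max_right _ _) (max_le ?_ ?_) (zero_le_one.trans hp)
  · have hle := norm_inner_cfc_sub_cfc_le hA hB ha hF hC hAB (g i) (e i)
    rw [hg.1 i, he.1 i, one_pow, add_self_div_two, mul_one] at hle
    exact sub_le_iff_le_add.mpr hle
  · exact Finset.sum_nonneg fun m _ => mul_nonneg (hw i m) (abs_nonneg _)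

lemma sum_rpow_norm_inner_cfc_sub_cfc_le (hA : IsSelfAdjoint A) (hB : IsSelfAdjoint B)
    (ha : 0 < a) (hC0 : 0 < C) (hF : DifferentiableOn ℂ F {z | |z.im| ≤ a})
    (hC : ∀ z : ℂ, |z.im| ≤ a → ‖F z‖ ≤ C) (hp : 1 ≤ p)
    (hAB : Summable fun j => singularValue (A - B) j ^ p) {κ : Type*} [Fintype κ]
    {e g : κ → H} (he : Orthonormal ℂ e) (hg : Orthonormal ℂ g) :
    ∑ i, ‖inner ℂ (g i)
        ((cfc (fun z : ℂ => F z.re) A - cfc (fun z : ℂ => F z.re) B) (e i))‖ ^ p ≤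
      (C / a) ^ p * ∑' j, singularValue (A - B) j ^ p := by
  set T := cfc (fun z : ℂ => F z.re) A - cfc (fun z : ℂ => F z.re) B
  have hp0 : 0 < p := one_pos.trans_le hp
  have htrunc : ∀ δ > 0, ∑ i, (max (‖inner ℂ (g i) (T (e i))‖ - C / a * (2 * δ)) 0) ^ p ≤
      (C / a) ^ p * ∑' j, singularValue (A - B) j ^ p := fun δ hδ => by
    obtain ⟨j, hj⟩ := exists_singularValue_lt hp0 hAB hδ
    obtain ⟨n, u, l, hu, hl, happrox⟩ := exists_norm_sub_sum_rankOne_le (hA.sub hB) hj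
    refine (sum_rpow_max_norm_inner_cfc_sub_cfc_sub_le hA hB ha hC0 hF hC hp hu happrox he
      hg).trans ?_
    gcongr
    calc ∑ m, |l m| ^ p ≤ ∑ m : Fin n, singularValue (A - B) m ^ p := by
          gcongr with m
          exact hl m
      _ = ∑ j ∈ Finset.range n, singularValue (A - B) j ^ p :=
          (Finset.sum_range fun j => singularValue (A - B) j ^ p).symm
      _ ≤ ∑' j, singularValue (A - B) j ^ p :=
          hAB.sum_le_tsum _ fun j _ => Real.rpow_nonneg (singularValue_nonneg _ j) p
  have hcont : Continuous fun δ : ℝ =>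
      ∑ i, (max (‖inner ℂ (g i) (T (e i))‖ - C / a * (2 * δ)) 0) ^ p := by
    fun_prop (disch := exact hp0.le)
  have hlim := (hcont.tendsto 0).mono_left (nhdsWithin_le_nhds (s := Set.Ioi 0))
  simp only [mul_zero, sub_zero, max_eq_left (norm_nonneg _)] at hlim
  exact le_of_tendsto hlim (eventually_mem_nhdsWithin.mono htrunc)

lemma sum_rpow_singularValue_cfc_sub_cfc_le (hA : IsSelfAdjoint A) (hB : IsSelfAdjoint B)
    (ha : 0 < a) (hC0 : 0 < C) (hF : DifferentiableOn ℂ F {z | |z.im| ≤ a})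
    (hC : ∀ z : ℂ, |z.im| ≤ a → ‖F z‖ ≤ C) (hp : 1 ≤ p)
    (hAB : Summable fun j => singularValue (A - B) j ^ p) (n : ℕ) :
    ∑ j ∈ Finset.range n,
        singularValue (cfc (fun z : ℂ => F z.re) A - cfc (fun z : ℂ => F z.re) B) j ^ p ≤
      (2 * (C / a)) ^ p * ∑' j, singularValue (A - B) j ^ p := by
  have htsum : 0 ≤ ∑' j, singularValue (A - B) j ^ p :=
    tsum_nonneg fun j => Real.rpow_nonneg (singularValue_nonneg _ j) p
  calc _ ≤ 2 * ((C / a) ^ p * ∑' j, singularValue (A - B) j ^ p) :=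
        sum_rpow_singularValue_le (one_pos.trans_le hp) (fun _ _ _ he hg =>
          sum_rpow_norm_inner_cfc_sub_cfc_le hA hB ha hC0 hF hC hp hAB he hg) n
    _ ≤ 2 ^ p * ((C / a) ^ p * ∑' j, singularValue (A - B) j ^ p) := by
        gcongr
        exact Real.self_le_rpow_of_one_le one_le_two hp
    _ = (2 * (C / a)) ^ p * ∑' j, singularValue (A - B) j ^ p := by
        rw [Real.mul_rpow zero_le_two (by positivity), mul_assoc]

lemma tsum_ofReal_rpow_le_of_sum_range_le {s t : ℕ → ℝ} {c p : ℝ} (hs : ∀ j, 0 ≤ s j)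
    (ht : ∀ j, 0 ≤ t j) (hc : 0 < c) (hp : 0 < p)
    (h : Summable (fun j => t j ^ p) →
      ∀ n, ∑ j ∈ Finset.range n, s j ^ p ≤ c ^ p * ∑' j, t j ^ p) :
    (∑' j, ENNReal.ofReal (s j ^ p)) ^ (1 / p) ≤
      ENNReal.ofReal c * (∑' j, ENNReal.ofReal (t j ^ p)) ^ (1 / p) := by
  have htp : ∀ j, 0 ≤ t j ^ p := fun j => Real.rpow_nonneg (ht j) p
  by_cases hsum : Summable fun j => t j ^ p
  · have hle : ∑' j, ENNReal.ofReal (s j ^ p) ≤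
        ENNReal.ofReal c ^ p * ∑' j, ENNReal.ofReal (t j ^ p) := by
      rw [ENNReal.ofReal_rpow_of_pos hc, ← ENNReal.ofReal_tsum_of_nonneg htp hsum,
        ← ENNReal.ofReal_mul (by positivity)]
      refine ENNReal.tsum_le_of_sum_range_le fun n => ?_
      rw [← ENNReal.ofReal_sum_of_nonneg fun j _ => Real.rpow_nonneg (hs j) p]
      exact ENNReal.ofReal_le_ofReal (h hsum n)
    calc _ ≤ (ENNReal.ofReal c ^ p * ∑' j, ENNReal.ofReal (t j ^ p)) ^ (1 / p) := by gcongr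
      _ = _ := by
        rw [ENNReal.mul_rpow_of_nonneg _ _ (by positivity), one_div,
          ENNReal.rpow_rpow_inv hp.ne']
  · have htop : ∑' j, ENNReal.ofReal (t j ^ p) = ⊤ := by
      by_contra hne
      exact hsum ((ENNReal.summable_toReal hne).congr fun j => ENNReal.toReal_ofReal (htp j))
    rw [htop, ENNReal.top_rpow_of_pos (by positivity), ENNReal.mul_top (by simpa using hc)]
    exact le_top

theorem schatten_bandlimited_estimate_general (hA : IsSelfAdjoint A) (hB : IsSelfAdjoint B)
    (ha : 0 < a) (hC0 : 0 < C) (hF : DifferentiableOn ℂ F {z | |z.im| ≤ a})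
    (hC : ∀ z : ℂ, |z.im| ≤ a → ‖F z‖ ≤ C) (hp : 1 ≤ p) :
    (∑' j : ℕ, ENNReal.ofReal
        (singularValue (cfc (fun z : ℂ => F z.re) A - cfc (fun z : ℂ => F z.re) B) j ^ p)) ^ (1 / p)
      ≤ ENNReal.ofReal (2 * (C / a)) *
          (∑' j : ℕ, ENNReal.ofReal (singularValue (A - B) j ^ p)) ^ (1 / p) :=
  tsum_ofReal_rpow_le_of_sum_range_le (singularValue_nonneg _) (singularValue_nonneg _)
    (by positivity) (one_pos.trans_le hp)
    (sum_rpow_singularValue_cfc_sub_cfc_le hA hB ha hC0 hF hC hp)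

end SchattenEstimate

lemma norm_le_exp_one_mul_of_abs_im_le {F : ℂ → ℂ} {σ M : ℝ} (hσ : 0 < σ) (hM : 0 ≤ M)
    (hF : ∀ z : ℂ, ‖F z‖ ≤ M * Real.exp (σ * |z.im|)) {z : ℂ} (hz : |z.im| ≤ 1 / σ) :
    ‖F z‖ ≤ Real.exp 1 * M := by
  refine (hF z).trans ?_
  rw [mul_comm]
  gcongr
  exact (le_div_iff₀' hσ).mp hz

/-- Schatten-norm Bernstein-type inequality: there is an absolute constant `c > 0` such
that for `p ∈ [1,∞)`, any function `f` bandlimited with parameters `(σ, M)` (restriction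
to `ℝ` of an entire `F` with `|F z| ≤ M·exp(σ|Im z|)`), and all bounded self-adjoint
operators `A, B`,
`‖f(A) − f(B)‖_{S_p} ≤ c·σ·M·‖A − B‖_{S_p}` (both sides computed in `[0,∞]`). -/
theorem schatten_bandlimited_estimate :
    ∃ c : ℝ, 0 < c ∧
      ∀ (H : Type*) [NormedAddCommGroup H] [InnerProductSpace ℂ H] [CompleteSpace H],
      ∀ (p σ M : ℝ), 1 ≤ p → 0 < σ → 0 < M →
      ∀ (f : ℝ → ℂ) (F : ℂ → ℂ), Differentiable ℂ F →
        (∀ z : ℂ, ‖F z‖ ≤ M * Real.exp (σ * |z.im|)) →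
        (∀ x : ℝ, f x = F x) →
      ∀ (A B : H →L[ℂ] H), IsSelfAdjoint A → IsSelfAdjoint B →
        (∑' j : ℕ, ENNReal.ofReal
            (singularValue (cfc (fun z : ℂ => f z.re) A - cfc (fun z : ℂ => f z.re) B) j
              ^ p)) ^ (1 / p)
          ≤ ENNReal.ofReal (c * σ * M) *
              (∑' j : ℕ, ENNReal.ofReal (singularValue (A - B) j ^ p)) ^ (1 / p) := by
  refine ⟨2 * Real.exp 1, by positivity, ?_⟩
  intro H _ _ _ p σ M hp hσ hM f F hF hbound hfF A B hA hB
  simp only [hfF]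
  have hconst : 2 * Real.exp 1 * σ * M = 2 * (Real.exp 1 * M / (1 / σ)) := by field_simp
  rw [hconst]
  exact schatten_bandlimited_estimate_general hA hB (by positivity) (by positivity)
    hF.differentiableOn (fun _ => norm_le_exp_one_mul_of_abs_im_le hσ hM.le hbound) hp
end

section
/- Let σ, M > 0 and let f : ℝ → ℂ be bandlimited with parameters (σ, M). Let A and K be bounded self-adjoint operators on a complex Hilbert space H. Then the map t ↦ f(A + t·K) from ℝ to the Banach space of bounded operators on H (with the operator norm) is continuously differentiable, and its derivative at every t ∈ ℝ satisfies ‖(d/dt) f(A + t·K)‖ ≤ σ·M·‖K‖. -/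
/-!
The entire function `F` is applied to `A + zK`, `z` complex, through its Taylor series. Bernstein's
inequality bounds the Taylor coefficients of `F` by `M σⁿ / n!`, so `z ↦ F(A + zK)` is an
operator-valued entire function of exponential type `σ‖K‖`. On the real line it agrees with the
continuous functional calculus of a self-adjoint operator, hence is bounded there by `M`, and
Bernstein's inequality applied once more bounds its derivative by `σ‖K‖M`.

Bernstein's inequality for scalar `g` comes from comparison with exponentials: for `‖l‖ > M` the
function `h z = g z - l exp (-iσz)` has no zeros in the closed upper half-plane, so
Phragmén–Lindelöf applied to `conj (h (conj z)) / h z` gives `‖h (conj z)‖ ≤ ‖h z‖` there.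
Differentiating across the real axis yields `Im (conj (h 0) * h' 0) ≤ 0`, and a suitable choice of
`arg l` turns this into `‖g' 0‖ ≤ σ‖l‖`. The vector-valued case follows by duality.
-/

open Complex Filter Topology
open scoped ComplexConjugate ContDiff Nat

section HalfPlane

variable {E : Type*} [NormedAddCommGroup E] [NormedSpace ℂ E]

theorem norm_le_of_im_nonneg_of_norm_ofReal_le {k : ℂ → E} {B C D M : ℝ} {z : ℂ}
    (hk : DifferentiableOn ℂ k {z | 0 ≤ z.im})
    (hgrowth : ∀ z : ℂ, 0 ≤ z.im → ‖k z‖ ≤ C * Real.exp (B * ‖z‖))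
    (him : ∀ y : ℝ, 0 ≤ y → ‖k (y * I)‖ ≤ D) (hre : ∀ x : ℝ, ‖k x‖ ≤ M) (hz : 0 ≤ z.im) :
    ‖k z‖ ≤ M := by
  suffices hrot : ‖k ((-I * z) * I)‖ ≤ M by
    have hz_eq : (-I * z) * I = z := by linear_combination (-z) * I_mul_I
    rwa [hz_eq] at hrot
  refine PhragmenLindelof.right_half_plane_of_bounded_on_real (f := fun w ↦ k (w * I))
    ?_ ⟨1, one_lt_two, B, ?_⟩ ?_ (fun x ↦ ?_) (by simpa using hz)
  · refine DifferentiableOn.diffContOnCl ?_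
    rw [closure_setOfPred_lt_re]
    exact hk.comp (by fun_prop) fun w hw ↦ by simpa using hw
  · refine Asymptotics.IsBigO.of_bound C (eventually_inf_principal.2 (.of_forall fun w hw ↦ ?_))
    simpa using hgrowth (w * I) (by simpa using (Set.mem_ofPred.1 hw).le)
  · exact isBoundedUnder_of_eventually_le ((eventually_ge_atTop 0).mono him)
  · have hx : (x * I * I : ℂ) = ((-x : ℝ) : ℂ) := by
      push_cast
      linear_combination (x : ℂ) * I_mul_I
    simpa only [hx] using hre (-x)

theorem norm_le_mul_exp_im_of_norm_le_exp {F : ℂ → E} {σ C M : ℝ} {z : ℂ} (hσ : 0 ≤ σ)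
    (hF : DifferentiableOn ℂ F {z | 0 ≤ z.im})
    (hgrowth : ∀ z : ℂ, 0 ≤ z.im → ‖F z‖ ≤ C * Real.exp (σ * ‖z‖)) (hreal : ∀ x : ℝ, ‖F x‖ ≤ M)
    (hz : 0 ≤ z.im) : ‖F z‖ ≤ M * Real.exp (σ * z.im) := by
  have hexp (w : ℂ) : ‖exp (σ * I * w) • F w‖ = Real.exp (-(σ * w.im)) * ‖F w‖ := by
    simp [norm_smul, norm_exp]
  have hdamped : ‖exp (σ * I * z) • F z‖ ≤ M := by
    refine norm_le_of_im_nonneg_of_norm_ofReal_le (k := fun w ↦ exp (σ * I * w) • F w)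
      (B := σ) (C := C) (D := C) (by fun_prop) (fun w hw ↦ ?_) (fun y hy ↦ ?_) (fun x ↦ ?_) hz
    · rw [hexp]
      refine (mul_le_of_le_one_left (norm_nonneg _) ?_).trans (hgrowth w hw)
      exact Real.exp_le_one_iff.2 (neg_nonpos.2 (mul_nonneg hσ hw))
    · have hy_growth : ‖F (y * I)‖ ≤ C * Real.exp (σ * y) := by
        simpa [abs_of_nonneg hy] using hgrowth (y * I) (by simpa using hy)
      rw [hexp, Real.exp_neg, inv_mul_le_iff₀ (Real.exp_pos _), mul_comm _ C]
      simpa using hy_growth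
    · simpa [hexp] using hreal x
  rwa [hexp, Real.exp_neg, inv_mul_le_iff₀ (Real.exp_pos _), mul_comm] at hdamped

theorem norm_conj_le_of_norm_conj_le_mul {h : ℂ → ℂ} {C : ℝ} {z : ℂ} (hd : Differentiable ℂ h)
    (hne : ∀ z : ℂ, 0 ≤ z.im → h z ≠ 0)
    (hC : ∀ z : ℂ, 0 ≤ z.im → ‖h (conj z)‖ ≤ C * ‖h z‖) (hz : 0 ≤ z.im) :
    ‖h (conj z)‖ ≤ ‖h z‖ := by
  have hbound : ∀ w : ℂ, 0 ≤ w.im → ‖conj (h (conj w)) / h w‖ ≤ C := fun w hw ↦ by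
    rw [norm_div, norm_conj, div_le_iff₀ (norm_pos_iff.2 (hne w hw))]
    exact hC w hw
  have hdiff : DifferentiableOn ℂ (fun w ↦ conj (h (conj w)) / h w) {w | 0 ≤ w.im} := fun w hw ↦ by
    have hnum : DifferentiableAt ℂ (fun w ↦ conj (h (conj w))) w := by
      simpa [Function.comp_def] using (hd (conj w)).conj_conj
    exact (hnum.div (hd w) (hne w hw)).differentiableWithinAt
  have hquot : ‖conj (h (conj z)) / h z‖ ≤ 1 :=
    norm_le_of_im_nonneg_of_norm_ofReal_le (k := fun w ↦ conj (h (conj w)) / h w) (B := 0) hdiff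
      (fun w hw ↦ by simpa using hbound w hw) (fun y hy ↦ hbound _ (by simpa using hy))
      (fun x ↦ by simpa using div_self_le_one ‖h x‖) hz
  rwa [norm_div, norm_conj, div_le_one (norm_pos_iff.2 (hne z hz))] at hquot

theorem deriv_nonneg_of_forall_neg_le {ψ : ℝ → ℝ} {ψ' : ℝ} (hψ : HasDerivAt ψ ψ' 0)
    (hle : ∀ y, 0 ≤ y → ψ (-y) ≤ ψ y) : 0 ≤ ψ' := by
  have hneg : HasDerivAt (fun y ↦ ψ (-y)) (-ψ') 0 := by
    simpa [Function.comp_def] using HasDerivAt.comp (0 : ℝ) (by simpa using hψ) (hasDerivAt_neg 0)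
  have hlim : 0 ≤ ψ' - -ψ' := by
    refine ge_of_tendsto (hψ.sub hneg).tendsto_slope_zero_right ?_
    filter_upwards [self_mem_nhdsWithin] with y (hy : 0 < y)
    simpa using mul_nonneg (inv_nonneg.2 hy.le) (sub_nonneg.2 (hle y hy.le))
  linarith

theorem im_conj_mul_deriv_nonpos_of_norm_conj_le {h : ℂ → ℂ} (x : ℝ) (hd : DifferentiableAt ℂ h x)
    (hh : ∀ z : ℂ, 0 ≤ z.im → ‖h (conj z)‖ ≤ ‖h z‖) : (conj (h x) * deriv h x).im ≤ 0 := by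
  have hvert : HasDerivAt (fun y : ℝ ↦ h (x + y * I)) (deriv h x * I) 0 := by
    have hline : HasDerivAt (fun y : ℂ ↦ x + y * I) I ((0 : ℝ) : ℂ) := by
      simpa using ((hasDerivAt_id _).mul_const I).const_add (x : ℂ)
    exact (HasDerivAt.comp _ (by simpa using hd.hasDerivAt) hline).comp_ofReal
  have hnonneg := deriv_nonneg_of_forall_neg_le hvert.norm_sq fun y hy ↦ by
    have hy_conj : (x + (-y : ℝ) * I : ℂ) = conj (x + y * I) := by simp
    rw [hy_conj]
    gcongr
    exact hh _ (by simpa using hy)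
  simp only [Complex.inner, ofReal_zero, zero_mul, add_zero, mul_re, mul_im, conj_re, conj_im,
    I_re, I_im] at hnonneg ⊢
  linarith

theorem norm_le_mul_of_forall_im_conj_sub_mul_add_nonpos {c d : ℂ} {τ R : ℝ} (hτ : 0 ≤ τ)
    (hc : ‖c‖ < R) (h : ∀ l : ℂ, ‖l‖ = R → (conj (c - l) * (d + τ * I * l)).im ≤ 0) :
    ‖d‖ ≤ τ * R := by
  have hR : 0 < R := (norm_nonneg c).trans_lt hc
  rcases eq_or_ne d 0 with rfl | hd
  · simpa using mul_nonneg hτ hR.le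
  -- With `l = R * u`, the vector `d + τ * I * l` is the multiple `‖d‖ - τ * R` of `-I * u`.
  set u : ℂ := I * d / ‖d‖ with hu
  have hd_norm : (‖d‖ : ℂ) ≠ 0 := by simpa using hd
  have hu_norm : ‖u‖ = 1 := by simp [hu, hd]
  have hd_eq : d = -I * u * ‖d‖ := by
    rw [hu]
    field_simp
    rw [I_sq, neg_neg]
  have hcu : (conj c * u).re < R := (re_le_norm _).trans_lt (by simpa [hu_norm] using hc)
  have hu_conj : conj u * u = 1 := by rw [conj_mul', hu_norm]; simp
  have hfactor : conj (c - R * u) * (d + τ * I * (R * u)) =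
      ((‖d‖ - τ * R : ℝ) : ℂ) * (-I * (conj c * u - R)) := by
    simp only [map_sub, map_mul, conj_ofReal]
    push_cast
    linear_combination (conj c - R * conj u) * hd_eq + (‖d‖ - τ * R) * R * I * hu_conj
  have hle := h (R * u) (by simp [hu_norm, abs_of_pos hR])
  rw [hfactor, im_ofReal_mul] at hle
  have him : (-I * (conj c * u - R)).im = R - (conj c * u).re := by simp
  rw [him] at hle
  exact sub_nonpos.1 (nonpos_of_mul_nonpos_left hle (sub_pos.2 hcu))

theorem norm_mul_exp_neg_I_mul (σ : ℝ) (l z : ℂ) :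
    ‖l * exp (-(σ * I * z))‖ = ‖l‖ * Real.exp (σ * z.im) := by
  simp [norm_exp]

end HalfPlane

/-- Bandlimited functions in their Paley–Wiener form, as entire functions bounded by
`M * exp (σ * |Im z|)`. They take values in a normed space so that the notion covers both `F` and
the operator-valued function `z ↦ F(A + zK)`. -/
structure IsBandlimited {E : Type*} [NormedAddCommGroup E] [NormedSpace ℂ E] (σ M : ℝ)
    (F : ℂ → E) : Prop where
  differentiable : Differentiable ℂ F
  norm_le : ∀ z : ℂ, ‖F z‖ ≤ M * Real.exp (σ * |z.im|)

namespace IsBandlimited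

section Basic

variable {E E' : Type*} [NormedAddCommGroup E] [NormedSpace ℂ E]
  [NormedAddCommGroup E'] [NormedSpace ℂ E'] {σ M : ℝ} {F : ℂ → E}

theorem norm_ofReal_le (hF : IsBandlimited σ M F) (x : ℝ) : ‖F x‖ ≤ M := by
  simpa using hF.norm_le x

theorem bound_nonneg (hF : IsBandlimited σ M F) : 0 ≤ M :=
  (norm_nonneg _).trans (hF.norm_ofReal_le 0)

theorem comp_add_const (hF : IsBandlimited σ M F) (hσ : 0 ≤ σ) (c : ℂ) :
    IsBandlimited σ (M * Real.exp (σ * |c.im|)) fun z ↦ F (z + c) where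
  differentiable := hF.differentiable.comp (differentiable_id.add_const c)
  norm_le z := by
    have hM := hF.bound_nonneg
    calc ‖F (z + c)‖ ≤ M * Real.exp (σ * |(z + c).im|) := hF.norm_le _
      _ ≤ M * Real.exp (σ * |c.im| + σ * |z.im|) := by
        rw [← mul_add, add_comm z c, add_im]
        gcongr
        exact abs_add_le _ _
      _ = M * Real.exp (σ * |c.im|) * Real.exp (σ * |z.im|) := by rw [Real.exp_add, mul_assoc]

theorem clm_comp (hF : IsBandlimited σ M F) (L : E →L[ℂ] E') :
    IsBandlimited σ (M * ‖L‖) fun z ↦ L (F z) where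
  differentiable := L.differentiable.comp hF.differentiable
  norm_le z :=
    calc ‖L (F z)‖ ≤ ‖L‖ * ‖F z‖ := L.le_opNorm _
      _ ≤ ‖L‖ * (M * Real.exp (σ * |z.im|)) := by grw [hF.norm_le z]
      _ = M * ‖L‖ * Real.exp (σ * |z.im|) := by ring

theorem of_norm_le_exp {C : ℝ} (hσ : 0 ≤ σ) (hF : Differentiable ℂ F)
    (hgrowth : ∀ z, ‖F z‖ ≤ C * Real.exp (σ * ‖z‖)) (hreal : ∀ x : ℝ, ‖F x‖ ≤ M) :
    IsBandlimited σ M F where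
  differentiable := hF
  norm_le z := by
    rcases le_total 0 z.im with hz | hz
    · rw [abs_of_nonneg hz]
      exact norm_le_mul_exp_im_of_norm_le_exp hσ hF.differentiableOn (fun w _ ↦ hgrowth w) hreal hz
    · rw [abs_of_nonpos hz]
      simpa using norm_le_mul_exp_im_of_norm_le_exp (F := fun w ↦ F (-w)) (z := -z) hσ
        (by fun_prop) (fun w _ ↦ by simpa using hgrowth (-w))
        (fun x ↦ by simpa using hreal (-x)) (by simpa using hz)

end Basic

section Bernstein

variable {σ M : ℝ} {g : ℂ → ℂ} {l : ℂ}

theorem le_norm_sub_mul_exp (hg : IsBandlimited σ M g) {z : ℂ} (hz : 0 ≤ z.im) :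
    (‖l‖ - M) * Real.exp (σ * z.im) ≤ ‖g z - l * exp (-(σ * I * z))‖ := by
  have hgz : ‖g z‖ ≤ M * Real.exp (σ * z.im) := by simpa [abs_of_nonneg hz] using hg.norm_le z
  have htri := norm_sub_norm_le (l * exp (-(σ * I * z))) (g z)
  rw [norm_mul_exp_neg_I_mul, norm_sub_rev] at htri
  linarith

theorem norm_conj_sub_mul_exp_le (hσ : 0 ≤ σ) (hg : IsBandlimited σ M g) {z : ℂ} (hz : 0 ≤ z.im) :
    ‖g (conj z) - l * exp (-(σ * I * conj z))‖ ≤ (‖l‖ + M) * Real.exp (σ * z.im) := by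
  have hgz : ‖g (conj z)‖ ≤ M * Real.exp (σ * z.im) := by
    simpa [abs_of_nonneg hz] using hg.norm_le (conj z)
  have hexp : ‖l * exp (-(σ * I * conj z))‖ ≤ ‖l‖ * Real.exp (σ * z.im) := by
    rw [norm_mul_exp_neg_I_mul, conj_im]
    gcongr
    linarith
  linarith [norm_sub_le (g (conj z)) (l * exp (-(σ * I * conj z)))]

theorem norm_conj_sub_mul_exp_le_norm (hσ : 0 ≤ σ) (hg : IsBandlimited σ M g) (hl : M < ‖l‖)
    {z : ℂ} (hz : 0 ≤ z.im) :
    ‖g (conj z) - l * exp (-(σ * I * conj z))‖ ≤ ‖g z - l * exp (-(σ * I * z))‖ := by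
  have hgap : 0 < ‖l‖ - M := sub_pos.2 hl
  have hdiff := hg.differentiable
  refine norm_conj_le_of_norm_conj_le_mul (h := fun z ↦ g z - l * exp (-(σ * I * z)))
    (C := (‖l‖ + M) / (‖l‖ - M)) (by fun_prop) (fun w hw ↦ ?_) (fun w hw ↦ ?_) hz
  · exact norm_pos_iff.1 ((mul_pos hgap (Real.exp_pos _)).trans_le (hg.le_norm_sub_mul_exp hw))
  · have hM := hg.bound_nonneg
    calc ‖g (conj w) - l * exp (-(σ * I * conj w))‖
        ≤ (‖l‖ + M) * Real.exp (σ * w.im) := hg.norm_conj_sub_mul_exp_le hσ hw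
      _ = (‖l‖ + M) / (‖l‖ - M) * ((‖l‖ - M) * Real.exp (σ * w.im)) := by field_simp
      _ ≤ (‖l‖ + M) / (‖l‖ - M) * ‖g w - l * exp (-(σ * I * w))‖ := by
        gcongr
        exact hg.le_norm_sub_mul_exp hw

theorem im_conj_sub_mul_deriv_add_nonpos (hσ : 0 ≤ σ) (hg : IsBandlimited σ M g) (hl : M < ‖l‖) :
    (conj (g 0 - l) * (deriv g 0 + σ * I * l)).im ≤ 0 := by
  have hderiv : HasDerivAt (fun z ↦ g z - l * exp (-(σ * I * z))) (deriv g 0 + σ * I * l) 0 := by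
    have hphase : HasDerivAt (fun z : ℂ ↦ -(σ * I * z)) (-(σ * I)) 0 := by
      simpa using (hasDerivAt_id (0 : ℂ)).const_mul (-(σ * I))
    refine ((hg.differentiable 0).hasDerivAt.sub (hphase.cexp.const_mul l)).congr_deriv ?_
    simp only [mul_zero, neg_zero, exp_zero]
    ring
  have him := im_conj_mul_deriv_nonpos_of_norm_conj_le 0 (by simpa using hderiv.differentiableAt)
    fun z hz ↦ hg.norm_conj_sub_mul_exp_le_norm hσ hl hz
  rw [ofReal_zero, hderiv.deriv] at him
  simpa using him

end Bernstein

section Derivatives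

variable {E : Type*} [NormedAddCommGroup E] [NormedSpace ℂ E] {σ M : ℝ}

theorem norm_deriv_zero_le {g : ℂ → ℂ} (hσ : 0 ≤ σ) (hg : IsBandlimited σ M g) :
    ‖deriv g 0‖ ≤ σ * M := by
  have hgt : ∀ R, M < R → ‖deriv g 0‖ ≤ σ * R := fun R hR ↦
    norm_le_mul_of_forall_im_conj_sub_mul_add_nonpos hσ
      ((by simpa using hg.norm_ofReal_le 0 : ‖g 0‖ ≤ M).trans_lt hR)
      fun l hl ↦ hg.im_conj_sub_mul_deriv_add_nonpos hσ (hl ▸ hR)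
  have hlim : Tendsto (fun R ↦ σ * R) (𝓝[>] M) (𝓝 (σ * M)) :=
    ((continuous_const_mul σ).tendsto M).mono_left nhdsWithin_le_nhds
  exact ge_of_tendsto hlim (by filter_upwards [self_mem_nhdsWithin] using hgt)

variable [CompleteSpace E] {F : ℂ → E}

protected theorem deriv (hF : IsBandlimited σ M F) (hσ : 0 ≤ σ) :
    IsBandlimited σ (σ * M) (deriv F) where
  differentiable := hF.differentiable.deriv
  norm_le z := by
    have hM := hF.bound_nonneg
    refine NormedSpace.norm_le_dual_bound ℂ _ (by positivity) fun L ↦ ?_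
    have hL_deriv : HasDerivAt (fun w ↦ L (F (w + z))) (L (deriv F z)) 0 := by
      refine L.hasFDerivAt.comp_hasDerivAt 0 (HasDerivAt.comp_add_const 0 z ?_)
      simpa using (hF.differentiable z).hasDerivAt
    have hbound := norm_deriv_zero_le hσ ((hF.comp_add_const hσ z).clm_comp L)
    rw [hL_deriv.deriv] at hbound
    exact hbound.trans_eq (by ring)

protected theorem iteratedDeriv (hF : IsBandlimited σ M F) (hσ : 0 ≤ σ) (n : ℕ) :
    IsBandlimited σ (σ ^ n * M) (iteratedDeriv n F) := by
  induction n with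
  | zero => simpa using hF
  | succ n ih =>
    rw [iteratedDeriv_succ, pow_succ', mul_assoc]
    exact ih.deriv hσ

theorem contDiff_comp_ofReal (hF : IsBandlimited σ M F) {n : WithTop ℕ∞} :
    ContDiff ℝ n fun t : ℝ ↦ F t :=
  (hF.differentiable.contDiff.restrict_scalars ℝ).comp ofRealCLM.contDiff

theorem norm_deriv_comp_ofReal_le (hF : IsBandlimited σ M F) (hσ : 0 ≤ σ) (t : ℝ) :
    ‖deriv (fun s : ℝ ↦ F s) t‖ ≤ σ * M := by
  have hderiv : HasDerivAt (fun s : ℝ ↦ F s) (deriv F t) t := by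
    simpa [Function.comp_def] using
      HasDerivAt.scomp t (hF.differentiable t).hasDerivAt (ofRealCLM.hasDerivAt (x := t))
  rw [hderiv.deriv]
  exact (hF.deriv hσ).norm_ofReal_le t

end Derivatives

end IsBandlimited

section EntireCalculus

/-- The coefficient of `z ^ n` in the Taylor series of `F` at the origin. -/
noncomputable def taylorCoeffZero (F : ℂ → ℂ) (n : ℕ) : ℂ := (n ! : ℂ)⁻¹ * iteratedDeriv n F 0

/-- The holomorphic functional calculus for entire functions in a Banach algebra, defined by
substituting `a` into the Taylor series of `F` at the origin. Unlike `cfc F`, it makes sense at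
elements which are not normal, such as `A + zK` for complex `z`. -/
noncomputable def entireCalculus {𝒜 : Type*} [NormedRing 𝒜] [NormedAlgebra ℂ 𝒜] (F : ℂ → ℂ)
    (a : 𝒜) : 𝒜 := ∑' n, taylorCoeffZero F n • a ^ n

variable {F : ℂ → ℂ}

theorem hasSum_taylorCoeffZero_mul_pow (hF : Differentiable ℂ F) (z : ℂ) :
    HasSum (fun n ↦ taylorCoeffZero F n * z ^ n) (F z) := by
  convert! hasSum_taylorSeries_of_entire hF 0 z using 2 with n
  simp only [taylorCoeffZero, sub_zero, smul_eq_mul]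
  ring

theorem summable_norm_taylorCoeffZero_mul_pow (hF : Differentiable ℂ F) {r : ℝ} (hr : 0 ≤ r) :
    Summable fun n ↦ ‖taylorCoeffZero F n‖ * r ^ n := by
  simpa [abs_of_nonneg hr] using (hasSum_taylorCoeffZero_mul_pow hF r).summable.norm

theorem IsBandlimited.norm_taylorCoeffZero_le {σ M : ℝ} (hF : IsBandlimited σ M F) (hσ : 0 ≤ σ)
    (n : ℕ) : ‖taylorCoeffZero F n‖ ≤ M * (σ ^ n / n !) := by
  have hderiv : ‖iteratedDeriv n F 0‖ ≤ σ ^ n * M := by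
    simpa using (hF.iteratedDeriv hσ n).norm_ofReal_le 0
  calc ‖taylorCoeffZero F n‖ = (n ! : ℝ)⁻¹ * ‖iteratedDeriv n F 0‖ := by
        simp [taylorCoeffZero]
    _ ≤ (n ! : ℝ)⁻¹ * (σ ^ n * M) := by gcongr
    _ = M * (σ ^ n / n !) := by ring

section NormedAlgebra

variable {𝒜 : Type*} [NormedRing 𝒜]

theorem norm_pow_le_norm_one_mul (a : 𝒜) (n : ℕ) : ‖a ^ n‖ ≤ ‖(1 : 𝒜)‖ * ‖a‖ ^ n := by
  induction n with
  | zero => simp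
  | succ n ih =>
    calc ‖a ^ (n + 1)‖ ≤ ‖a ^ n‖ * ‖a‖ := by rw [pow_succ]; exact norm_mul_le _ _
      _ ≤ ‖(1 : 𝒜)‖ * ‖a‖ ^ n * ‖a‖ := by gcongr
      _ = ‖(1 : 𝒜)‖ * ‖a‖ ^ (n + 1) := by ring

variable [NormedAlgebra ℂ 𝒜]

theorem norm_smul_pow_le (c : ℂ) {a : 𝒜} {r : ℝ} (ha : ‖a‖ ≤ r) (n : ℕ) :
    ‖c • a ^ n‖ ≤ ‖(1 : 𝒜)‖ * (‖c‖ * r ^ n) :=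
  calc ‖c • a ^ n‖ ≤ ‖c‖ * (‖(1 : 𝒜)‖ * ‖a‖ ^ n) := by
        grw [norm_smul, norm_pow_le_norm_one_mul]
    _ ≤ ‖c‖ * (‖(1 : 𝒜)‖ * r ^ n) := by gcongr
    _ = ‖(1 : 𝒜)‖ * (‖c‖ * r ^ n) := by ring

variable [CompleteSpace 𝒜]

theorem hasSum_entireCalculus (hF : Differentiable ℂ F) (a : 𝒜) :
    HasSum (fun n ↦ taylorCoeffZero F n • a ^ n) (entireCalculus F a) :=
  (Summable.of_norm_bounded
    ((summable_norm_taylorCoeffZero_mul_pow hF (norm_nonneg a)).mul_left ‖(1 : 𝒜)‖)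
    fun n ↦ norm_smul_pow_le _ le_rfl n).hasSum

theorem differentiable_entireCalculus_comp (hF : Differentiable ℂ F) {g : ℂ → 𝒜}
    (hg : Differentiable ℂ g) : Differentiable ℂ fun z ↦ entireCalculus F (g z) := by
  intro z
  let U : Set ℂ := {w | ‖g w‖ < ‖g z‖ + 1}
  have hU : IsOpen U := isOpen_lt hg.continuous.norm continuous_const
  have hdiff : DifferentiableOn ℂ (fun w ↦ entireCalculus F (g w)) U :=
    differentiableOn_tsum_of_summable_norm
      ((summable_norm_taylorCoeffZero_mul_pow hF (by positivity)).mul_left ‖(1 : 𝒜)‖)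
      (fun n ↦ by fun_prop) hU
      fun n w (hw : ‖g w‖ < ‖g z‖ + 1) ↦ norm_smul_pow_le _ hw.le n
  exact hdiff.differentiableAt (hU.mem_nhds (lt_add_one ‖g z‖))

theorem IsBandlimited.norm_entireCalculus_le {σ M : ℝ} (hF : IsBandlimited σ M F) (hσ : 0 ≤ σ)
    (a : 𝒜) : ‖entireCalculus F a‖ ≤ ‖(1 : 𝒜)‖ * M * Real.exp (σ * ‖a‖) := by
  have hexp : HasSum (fun n : ℕ ↦ ‖(1 : 𝒜)‖ * M * ((σ * ‖a‖) ^ n / n !))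
      (‖(1 : 𝒜)‖ * M * Real.exp (σ * ‖a‖)) := by
    rw [Real.exp_eq_exp_ℝ]
    exact (NormedSpace.expSeries_div_hasSum_exp (σ * ‖a‖)).mul_left _
  refine (hasSum_entireCalculus hF.differentiable a).norm_le_of_bounded hexp fun n ↦ ?_
  calc ‖taylorCoeffZero F n • a ^ n‖
      ≤ ‖(1 : 𝒜)‖ * (‖taylorCoeffZero F n‖ * ‖a‖ ^ n) := norm_smul_pow_le _ le_rfl n
    _ ≤ ‖(1 : 𝒜)‖ * (M * (σ ^ n / n !) * ‖a‖ ^ n) := by grw [hF.norm_taylorCoeffZero_le hσ n]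
    _ = ‖(1 : 𝒜)‖ * M * ((σ * ‖a‖) ^ n / n !) := by ring

theorem IsBandlimited.entireCalculus_add_smul {σ M M' : ℝ} (hF : IsBandlimited σ M F) (hσ : 0 ≤ σ)
    (a k : 𝒜) (hreal : ∀ t : ℝ, ‖entireCalculus F (a + (t : ℂ) • k)‖ ≤ M') :
    IsBandlimited (σ * ‖k‖) M' fun z : ℂ ↦ entireCalculus F (a + z • k) := by
  refine .of_norm_le_exp (C := ‖(1 : 𝒜)‖ * M * Real.exp (σ * ‖a‖)) (by positivity)
    (differentiable_entireCalculus_comp hF.differentiable (by fun_prop)) (fun z ↦ ?_) hreal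
  have hM := hF.bound_nonneg
  calc ‖entireCalculus F (a + z • k)‖ ≤ ‖(1 : 𝒜)‖ * M * Real.exp (σ * ‖a + z • k‖) :=
        hF.norm_entireCalculus_le hσ _
    _ ≤ ‖(1 : 𝒜)‖ * M * Real.exp (σ * (‖a‖ + ‖z‖ * ‖k‖)) := by
      grw [norm_add_le, norm_smul]
    _ = ‖(1 : 𝒜)‖ * M * Real.exp (σ * ‖a‖) * Real.exp (σ * ‖k‖ * ‖z‖) := by
      rw [mul_assoc _ (Real.exp _), ← Real.exp_add]
      ring_nf

end NormedAlgebra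

section CStarAlgebra

variable {𝒜 : Type*} [CStarAlgebra 𝒜] {a : 𝒜}

theorem cfc_finset_sum_mul_pow (c : ℕ → ℂ) (s : Finset ℕ) [IsStarNormal a] :
    cfc (fun z ↦ ∑ n ∈ s, c n * z ^ n) a = ∑ n ∈ s, c n • a ^ n := by
  have hsum := cfc_sum (fun n z ↦ c n * z ^ n) a s fun n _ ↦ by fun_prop
  rw [Finset.sum_fn] at hsum
  rw [hsum]
  refine Finset.sum_congr rfl fun n _ ↦ ?_
  rw [cfc_const_mul (c n) (fun z ↦ z ^ n) a, cfc_pow_id a n]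

theorem cfc_eq_entireCalculus (hF : Differentiable ℂ F) (a : 𝒜) [IsStarNormal a] :
    cfc F a = entireCalculus F a := by
  have hunif : TendstoUniformlyOn (fun N z ↦ ∑ n ∈ Finset.range N, taylorCoeffZero F n * z ^ n)
      (fun z ↦ ∑' n, taylorCoeffZero F n * z ^ n) atTop (spectrum ℂ a) :=
    tendstoUniformlyOn_tsum_nat
      (summable_norm_taylorCoeffZero_mul_pow hF (by positivity : 0 ≤ ‖a‖ * ‖(1 : 𝒜)‖))
      fun n z hz ↦ by
        rw [norm_mul, norm_pow]
        grw [spectrum.norm_le_norm_mul_of_mem hz]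
  simp only [(hasSum_taylorCoeffZero_mul_pow hF _).tsum_eq] at hunif
  have hcfc := tendsto_cfc_fun hunif (.of_forall fun N ↦ by fun_prop)
  simp only [cfc_finset_sum_mul_pow] at hcfc
  exact tendsto_nhds_unique hcfc (hasSum_entireCalculus hF a).tendsto_sum_nat

protected theorem IsBandlimited.norm_cfc_le {σ M : ℝ} (hF : IsBandlimited σ M F)
    (ha : IsSelfAdjoint a) : ‖cfc F a‖ ≤ M := by
  refine norm_cfc_le hF.bound_nonneg fun z hz ↦ ?_
  rw [ha.mem_spectrum_eq_re hz]
  exact hF.norm_ofReal_le _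

theorem cfc_comp_re_eq_cfc {f : ℝ → ℂ} (hfF : ∀ x : ℝ, f x = F x) (ha : IsSelfAdjoint a) :
    cfc (fun z : ℂ ↦ f z.re) a = cfc F a :=
  cfc_congr fun z hz ↦ by
    rw [hfF, ← ha.mem_spectrum_eq_re hz]

end CStarAlgebra

end EntireCalculus

theorem operator_differentiable_bandlimited_general {𝒜 : Type*} [CStarAlgebra 𝒜] {σ M : ℝ}
    (hσ : 0 ≤ σ) {f : ℝ → ℂ} {F : ℂ → ℂ} (hF : IsBandlimited σ M F) (hfF : ∀ x : ℝ, f x = F x)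
    {a k : 𝒜} (ha : IsSelfAdjoint a) (hk : IsSelfAdjoint k) :
    ContDiff ℝ ω (fun t : ℝ ↦ cfc (fun z : ℂ ↦ f z.re) (a + t • k)) ∧
    ∀ t : ℝ, ‖deriv (fun t : ℝ ↦ cfc (fun z : ℂ ↦ f z.re) (a + t • k)) t‖ ≤ σ * M * ‖k‖ := by
  have hline (t : ℝ) : IsSelfAdjoint (a + (t : ℂ) • k) :=
    ha.add (.smul (conj_ofReal t) hk)
  have hcfc (t : ℝ) : cfc F (a + (t : ℂ) • k) = entireCalculus F (a + (t : ℂ) • k) :=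
    have := (hline t).isStarNormal
    cfc_eq_entireCalculus hF.differentiable _
  have hG : IsBandlimited (σ * ‖k‖) M fun z : ℂ ↦ entireCalculus F (a + z • k) :=
    hF.entireCalculus_add_smul hσ a k fun t ↦ hcfc t ▸ hF.norm_cfc_le (hline t)
  have hrestrict : (fun t : ℝ ↦ cfc (fun z : ℂ ↦ f z.re) (a + t • k)) =
      fun t : ℝ ↦ entireCalculus F (a + (t : ℂ) • k) := funext fun t ↦ by
    rw [← coe_smul, cfc_comp_re_eq_cfc hfF (hline t), hcfc]
  rw [hrestrict]
  exact ⟨hG.contDiff_comp_ofReal, fun t ↦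
    (hG.norm_deriv_comp_ofReal_le (by positivity) t).trans_eq (by ring)⟩

/-- Operator differentiability for bandlimited functions (which lie in the Besov class
`B¹_{∞,1}(ℝ)`): if `f : ℝ → ℂ` is the restriction of an entire `F` with
`|F z| ≤ M·exp(σ|Im z|)`, and `A, K` are bounded self-adjoint operators, then
`t ↦ f(A + tK)` is continuously differentiable in the operator norm and its derivative
satisfies `‖(d/dt) f(A + tK)‖ ≤ σ·M·‖K‖` for every `t`. -/
theorem operator_differentiable_bandlimited
    {H : Type*} [NormedAddCommGroup H] [InnerProductSpace ℂ H] [CompleteSpace H]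
    (σ M : ℝ) (hσ : 0 < σ) (hM : 0 < M)
    (f : ℝ → ℂ) (F : ℂ → ℂ) (hF : Differentiable ℂ F)
    (hFbound : ∀ z : ℂ, ‖F z‖ ≤ M * Real.exp (σ * |z.im|))
    (hfF : ∀ x : ℝ, f x = F x)
    (A K : H →L[ℂ] H) (hA : IsSelfAdjoint A) (hK : IsSelfAdjoint K) :
    ContDiff ℝ 1 (fun t : ℝ => cfc (fun z : ℂ => f z.re) (A + t • K)) ∧
    ∀ t : ℝ,
      ‖deriv (fun t : ℝ => cfc (fun z : ℂ => f z.re) (A + t • K)) t‖ ≤ σ * M * ‖K‖ := by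
  exact (operator_differentiable_bandlimited_general hσ.le ⟨hF, hFbound⟩ hfF hA hK).imp_left
    (·.of_le le_top)
end

section
/- There is an absolute constant c > 0 with the following property. Let σ, M > 0 and let F : ℂ² → ℂ be an entire function satisfying |F(z₁, z₂)| ≤ M·exp(σ·(|Im z₁| + |Im z₂|)) for all (z₁, z₂) ∈ ℂ², and define f : ℂ → ℂ by f(x + i·y) = F(x, y) for x, y ∈ ℝ (so f, viewed as a bounded function on ℝ², has Fourier transform supported in [−σ, σ] × [−σ, σ]). Then for all bounded normal operators N₁ and N₂ on a complex Hilbert space, ‖f(N₁) − f(N₂)‖ ≤ c·σ·M·‖N₁ − N₂‖. -/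
/-!
Put `γ = 1/σ` and `e(z₁, z₂) = exp (σ i (z₁ + z₂))`. The functions `e` and `h = e F` are bounded and
analytic on the tube `{Im z₁ ≥ -γ, Im z₂ ≥ -γ}`, and `f = conj e · h` on `ℝ²` with `|e| = 1`, so
it is enough to estimate `h(N₁) - h(N₂)` for such `h`.

Write `P_t(N)` and `Q_t(N)` for the Poisson kernel of the half-plane `{Im z ≥ -γ}` with pole
`t - γi`, evaluated at `Re N` and `Im N` respectively. Poisson's formula in each variable gives
`h(N₁) - h(N₂) = ∫ h(Re N₁, t - γi) (Q_t(N₁) - Q_t(N₂)) dt +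
∫ (P_t(N₁) - P_t(N₂)) h(t - γi, Im N₂) dt`.

Up to a constant, `P_t(N)` is both `R_t* R_t` and `R_t - R_t*`, where `R_t = (t - γi - Re N)⁻¹`. By
the second form and the resolvent identity, `|⟨u, (P_t(N₁) - P_t(N₂)) v⟩|` is at most
`‖N₁ - N₂‖ ‖R_t(N₁) u‖ ‖R_t(N₂) v‖ / π`; by the first, `∫ ‖R_t(N) u‖² dt = (π / γ) ‖u‖²`. The
coefficients, functions of `N₁` on the left and of `N₂` on the right, commute with the adjacent
resolvents, so `2xy ≤ x² + y²`, applied with unit vectors `u` and `v`, bounds each integral by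
`sup |h| ‖N₁ - N₂‖ / γ`.
-/

section BandlimitedCalculus

open Complex MeasureTheory Filter Topology Function ProbabilityTheory Bornology
open scoped NNReal InnerProductSpace ComplexConjugate Real

section HalfPlane

variable {E : Type*} [NormedAddCommGroup E] [NormedSpace ℂ E]

theorem intervalIntegral_bottom_side_eq {G : ℂ → E} {a b R : ℝ} (hab : a ≤ b)
    (hG : DiffContOnCl ℂ G {z | a < z.im}) :
    ∫ t in -R..R, G (t + a * I) = (∫ t in -R..R, G (t + b * I)) -
      I • (∫ y in a..b, G (R + y * I)) + I • ∫ y in a..b, G (-R + y * I) := by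
  have hcont : ContinuousOn G {z | a ≤ z.im} := closure_setOfPred_lt_im a ▸ hG.continuousOn
  have hrect := integral_boundary_rect_eq_zero_of_continuousOn_of_differentiableOn G
    (-R + a * I) (R + b * I)
    (hcont.mono fun z hz ↦ by
      have : z.im ∈ Set.uIcc a b := by simpa using hz.2
      exact (Set.uIcc_of_le hab ▸ this).1)
    (hG.differentiableOn.mono fun z hz ↦ by simpa [hab] using hz.2.1)
  simp only [add_re, add_im, neg_re, neg_im, ofReal_re, ofReal_im, re_ofReal_mul, im_ofReal_mul,
    I_re, I_im, mul_zero, mul_one, add_zero, zero_add, neg_zero, ofReal_neg] at hrect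
  rw [← sub_eq_zero, ← hrect]
  abel

theorem norm_intervalIntegral_bottom_side_le {G : ℂ → E} {a R K : ℝ} (haR : |a| ≤ R)
    (hG : DiffContOnCl ℂ G {z | a < z.im}) (hK : ∀ z : ℂ, a ≤ z.im → R ≤ ‖z‖ → ‖G z‖ ≤ K) :
    ‖∫ t in -R..R, G (t + a * I)‖ ≤ 6 * (K * R) := by
  obtain ⟨hRa, haR⟩ := abs_le.1 haR
  have hK0 : 0 ≤ K := (norm_nonneg _).trans <| hK (R * I) (by simpa using haR)
    (by simpa using le_abs_self R)
  have hside (φ : ℝ → ℂ) {u v : ℝ} (huv : u ≤ v) (hlen : v - u ≤ 2 * R)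
      (hφ : ∀ s ∈ Set.Ioc u v, a ≤ (φ s).im ∧ R ≤ ‖φ s‖) :
      ‖∫ s in u..v, G (φ s)‖ ≤ 2 * (K * R) :=
    calc ‖∫ s in u..v, G (φ s)‖ ≤ K * |v - u| :=
          intervalIntegral.norm_integral_le_of_norm_le_const fun s hs ↦
            have hs' := hφ s (Set.uIoc_of_le huv ▸ hs)
            hK _ hs'.1 hs'.2
      _ ≤ K * (2 * R) := by rw [abs_of_nonneg (sub_nonneg.2 huv)]; gcongr
      _ = 2 * (K * R) := by ring
  have htop := hside (fun x ↦ x + R * I) (u := -R) (v := R) (by linarith) (by linarith)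
    fun x _ ↦ ⟨by simpa using haR,
      (le_abs_self R).trans (by simpa using abs_im_le_norm (x + R * I))⟩
  have hright := hside (fun y ↦ R + y * I) haR (by linarith) fun y hy ↦
    ⟨by simpa using hy.1.le, (le_abs_self R).trans (by simpa using abs_re_le_norm (R + y * I))⟩
  have hleft := hside (fun y ↦ -R + y * I) haR (by linarith) fun y hy ↦
    ⟨by simpa using hy.1.le, (le_abs_self R).trans (by simpa using abs_re_le_norm (-R + y * I))⟩
  rw [intervalIntegral_bottom_side_eq haR hG]
  refine (norm_add_le_of_le (norm_sub_le_of_le htop ?_) ?_).trans_eq (by ring :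
    2 * (K * R) + 2 * (K * R) + 2 * (K * R) = 6 * (K * R))
  · simpa only [norm_smul, norm_I, one_mul] using hright
  · simpa only [norm_smul, norm_I, one_mul] using hleft

theorem integral_horizontal_line_eq_zero {G : ℂ → E} {a : ℝ}
    (hG : DiffContOnCl ℂ G {z | a < z.im}) (hint : Integrable fun t : ℝ ↦ G (t + a * I))
    (hdecay : Tendsto (fun z ↦ ‖z‖ * ‖G z‖) (cobounded ℂ ⊓ 𝓟 {z | a ≤ z.im}) (𝓝 0)) :
    ∫ t : ℝ, G (t + a * I) = 0 := by
  have hlim := intervalIntegral_tendsto_integral hint tendsto_neg_atTop_atBot tendsto_id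
  refine tendsto_nhds_unique hlim (Metric.tendsto_nhds.2 fun ε hε ↦ ?_)
  obtain ⟨R₀, hR₀⟩ : ∃ R₀ : ℝ, ∀ z : ℂ, R₀ ≤ ‖z‖ → a ≤ z.im → ‖z‖ * ‖G z‖ ≤ ε / 7 := by
    have := eventually_inf_principal.1 (hdecay.eventually_le_const (by positivity : 0 < ε / 7))
    simpa using hasBasis_cobounded_norm.eventually_iff.1 this
  filter_upwards [eventually_ge_atTop (max R₀ |a|), eventually_gt_atTop 0] with R hR hRpos
  rw [dist_zero_right]
  have hGR (z : ℂ) (hz : a ≤ z.im) (hRz : R ≤ ‖z‖) : ‖G z‖ ≤ ε / 7 / R := by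
    rw [le_div_iff₀' hRpos]
    exact (mul_le_mul_of_nonneg_right hRz (norm_nonneg _)).trans
      (hR₀ z ((le_of_max_le_left hR).trans hRz) hz)
  refine (norm_intervalIntegral_bottom_side_le (le_of_max_le_right hR) hG hGR).trans_lt ?_
  rw [div_mul_cancel₀ _ hRpos.ne']
  linarith

end HalfPlane

section CauchyKernel

variable {γ : ℝ≥0}

theorem cauchyPDFReal_eq_norm_inv_sq (γ : ℝ≥0) (x t : ℝ) :
    cauchyPDFReal x γ t = γ / π * ‖(t - γ * I - x : ℂ)⁻¹‖ ^ 2 := by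
  rw [norm_inv, inv_pow, ← normSq_eq_norm_sq, normSq_apply, cauchyPDFReal_def]
  simp only [sub_re, sub_im, ofReal_re, ofReal_im, re_ofReal_mul, im_ofReal_mul, I_re, I_im]
  ring

theorem ofReal_cauchyPDFReal_eq_inv_sub_inv (γ : ℝ≥0) (x t : ℝ) :
    (cauchyPDFReal x γ t : ℂ) =
      (2 * π * I)⁻¹ * ((t - γ * I - x)⁻¹ - conj (t - γ * I - x : ℂ)⁻¹) := by
  have him : (t - γ * I - x : ℂ)⁻¹.im = γ * ‖(t - γ * I - x : ℂ)⁻¹‖ ^ 2 := by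
    rw [inv_im, norm_inv, inv_pow, ← normSq_eq_norm_sq]
    simp [div_eq_mul_inv]
  rw [Complex.sub_conj, cauchyPDFReal_eq_norm_inv_sq, him]
  push_cast
  field [Real.pi_ne_zero]

theorem continuous_cauchyPDFReal_uncurry (hγ : γ ≠ 0) :
    Continuous fun q : ℝ × ℝ ↦ cauchyPDFReal q.1 γ q.2 := by
  unfold cauchyPDFReal
  fun_prop (disch := intros; positivity)

theorem cauchyPDFReal_le_mul_cauchyPDFReal_zero (hγ : γ ≠ 0) (x t : ℝ) :
    cauchyPDFReal x γ t ≤ 2 * (1 + (x / γ) ^ 2) * cauchyPDFReal 0 γ t := by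
  have hkey : t ^ 2 + γ ^ 2 ≤ 2 * (1 + (x / γ) ^ 2) * ((t - x) ^ 2 + γ ^ 2) :=
    calc t ^ 2 + γ ^ 2 ≤ 2 * ((t - x) ^ 2 + x ^ 2 + γ ^ 2) := by
          nlinarith [sq_nonneg (t - 2 * x)]
      _ = 2 * ((t - x) ^ 2 + (1 + (x / γ) ^ 2) * γ ^ 2) := by
          field_simp
          ring
      _ ≤ 2 * (1 + (x / γ) ^ 2) * ((t - x) ^ 2 + γ ^ 2) := by
          nlinarith [mul_nonneg (sq_nonneg (x / γ)) (sq_nonneg (t - x))]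
  rw [cauchyPDFReal_def, cauchyPDFReal_def, mul_left_comm, sub_zero]
  gcongr
  rw [← div_eq_mul_inv, le_div_iff₀ (by positivity), inv_mul_le_iff₀ (by positivity), mul_comm]
  exact hkey

end CauchyKernel

section PoissonFormula

variable {E : Type*} [NormedAddCommGroup E] [NormedSpace ℂ E] {γ : ℝ≥0} {C : ℝ} {g : ℂ → E}

theorem tendsto_norm_mul_norm_inv_smul_dslope {s : Set ℂ} (hC : ∀ z ∈ s, ‖g z‖ ≤ C) (c : ℂ) :
    Tendsto (fun z ↦ ‖z‖ * ‖(z + c)⁻¹ • dslope g 0 z‖) (cobounded ℂ ⊓ 𝓟 s) (𝓝 0) := by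
  have hlim : Tendsto (fun z ↦ ‖(z + c)⁻¹‖ * (C + ‖g 0‖)) (cobounded ℂ) (𝓝 0) := by
    simpa using
      (tendsto_inv₀_cobounded.comp (tendsto_add_const_cobounded c)).norm.mul_const (C + ‖g 0‖)
  refine squeeze_zero' (.of_forall fun z ↦ by positivity) ?_ (hlim.mono_left inf_le_left)
  filter_upwards [mem_inf_of_right (mem_principal_self s)] with z hz
  have hslope : z • dslope g 0 z = g z - g 0 := by simpa using sub_smul_dslope g 0 z
  rw [norm_smul, mul_left_comm, ← norm_smul z, hslope]
  gcongr
  exact norm_sub_le_of_le (hC z hz) le_rfl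

theorem inv_smul_dslope_eq_cauchyPDFReal_smul (hγ : γ ≠ 0) (t : ℝ) :
    (t + (-γ : ℝ) * I + 2 * γ * I : ℂ)⁻¹ • dslope g 0 (t + (-γ : ℝ) * I) =
      (π / γ : ℝ) • (cauchyPDFReal 0 γ t • g (t - γ * I) - cauchyPDFReal 0 γ t • g 0) := by
  have hz : (t + (-γ : ℝ) * I : ℂ) = t - γ * I := by push_cast; ring
  have hconj : (t - γ * I + 2 * γ * I : ℂ) = conj (t - γ * I : ℂ) := by simp; ring
  have hne : (t - γ * I : ℂ) ≠ 0 := fun h ↦ hγ (by simpa using congrArg im h)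
  have hcoeff : (conj (t - γ * I : ℂ))⁻¹ * (t - γ * I : ℂ)⁻¹ =
      (π / γ * cauchyPDFReal 0 γ t : ℝ) := by
    rw [← mul_inv_rev, mul_conj, cauchyPDFReal_eq_norm_inv_sq, normSq_eq_norm_sq, norm_inv]
    rw [ofReal_zero, sub_zero, inv_pow, ← mul_assoc, div_mul_div_cancel₀ (by positivity),
      div_self Real.pi_ne_zero, one_mul]
    push_cast
    rfl
  rw [hz, hconj, dslope_of_ne _ hne, slope_def_module, sub_zero, smul_smul, hcoeff, ← smul_sub,
    smul_smul, Complex.coe_smul]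

variable [CompleteSpace E]

theorem diffContOnCl_inv_smul_dslope (hγ : γ ≠ 0) (hg : DiffContOnCl ℂ g {z | -γ < z.im}) :
    DiffContOnCl ℂ (fun z ↦ (z + 2 * γ * I)⁻¹ • dslope g 0 z) {z | -γ < z.im} := by
  have hnhds : {z : ℂ | -γ < z.im} ∈ 𝓝 0 :=
    (isOpen_im_gt _).mem_nhds (by simpa using pos_of_ne_zero hγ)
  have hdslope : DiffContOnCl ℂ (dslope g 0) {z | -γ < z.im} :=
    ⟨(differentiableOn_dslope hnhds).2 hg.differentiableOn,
      (continuousOn_dslope (mem_of_superset hnhds subset_closure)).2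
        ⟨hg.continuousOn, hg.differentiableOn.differentiableAt hnhds⟩⟩
  have hne (z : ℂ) (hz : -γ ≤ z.im) : z + 2 * γ * I ≠ 0 := fun h ↦ by
    have him : z.im + 2 * γ = 0 := by simpa using congrArg im h
    linarith [NNReal.coe_pos.2 (pos_of_ne_zero hγ)]
  refine DiffContOnCl.smul (DiffContOnCl.inv ?_ ?_) hdslope
  · exact (by fun_prop : Differentiable ℂ fun z : ℂ ↦ z + 2 * γ * I).diffContOnCl
  · rw [closure_setOfPred_lt_im]
    exact hne

-- `(g z - g 0) / (z (z + 2γi))` integrates to `0` over `Im z = -γ`, where `z + 2γi = conj z`.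
theorem integral_cauchyPDFReal_zero_smul (hγ : γ ≠ 0) (hg : DiffContOnCl ℂ g {z | -γ < z.im})
    (hC : ∀ z : ℂ, -γ ≤ z.im → ‖g z‖ ≤ C) :
    ∫ t : ℝ, cauchyPDFReal 0 γ t • g (t - γ * I) = g 0 := by
  have hcont : ContinuousOn g {z | -γ ≤ z.im} := closure_setOfPred_lt_im _ ▸ hg.continuousOn
  have hline (t : ℝ) : -γ ≤ (t - γ * I : ℂ).im := by simp
  have hint : Integrable fun t : ℝ ↦ cauchyPDFReal 0 γ t • g (t - γ * I) :=
    (integrable_cauchyPDFReal 0).smul_bdd C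
      (hcont.comp_continuous (by fun_prop) hline).aestronglyMeasurable
      (.of_forall fun t ↦ hC _ (hline t))
  have hint₀ : Integrable fun t : ℝ ↦ cauchyPDFReal 0 γ t • g 0 :=
    (integrable_cauchyPDFReal 0).smul_const _
  have hkernel (t : ℝ) := inv_smul_dslope_eq_cauchyPDFReal_smul (g := g) hγ t
  have hzero := integral_horizontal_line_eq_zero (diffContOnCl_inv_smul_dslope hγ hg)
    (by simp only [hkernel]; exact (hint.sub hint₀).smul (π / γ : ℝ))
    (tendsto_norm_mul_norm_inv_smul_dslope (s := {z : ℂ | -γ ≤ z.im}) hC _)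
  simp only [hkernel] at hzero
  rw [integral_smul, integral_sub hint hint₀, integral_smul_const,
    integral_cauchyPDFReal_eq_one 0 hγ, one_smul] at hzero
  have : π / γ ≠ 0 := by positivity
  exact sub_eq_zero.1 ((smul_eq_zero_iff_right this).1 hzero)

theorem integral_cauchyPDFReal_smul (hγ : γ ≠ 0) (hg : DiffContOnCl ℂ g {z | -γ < z.im})
    (hC : ∀ z : ℂ, -γ ≤ z.im → ‖g z‖ ≤ C) (x : ℝ) :
    ∫ t : ℝ, cauchyPDFReal x γ t • g (t - γ * I) = g x := by
  have hshift : DiffContOnCl ℂ (fun z ↦ g (z + x)) {z | -γ < z.im} := by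
    refine hg.comp (g := fun z : ℂ ↦ z + x) ?_ ?_
    · exact (differentiable_id.add_const _).diffContOnCl
    · intro z hz
      simpa using hz
  rw [← integral_add_right_eq_self _ x]
  simpa [cauchyPDFReal_def, add_sub_right_comm] using
    integral_cauchyPDFReal_zero_smul hγ hshift (C := C) fun z hz ↦ hC _ (by simpa using hz)

end PoissonFormula

section Resolvent

variable {A : Type*} [CStarAlgebra A] {p : ℂ → ℝ} {ζ : ℂ}

/-- The resolvent `(ζ - p(a))⁻¹` of the self-adjoint element `p(a)`; it is meaningful for
nonreal `ζ`. -/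
noncomputable def cfcResolvent (p : ℂ → ℝ) (ζ : ℂ) (a : A) : A :=
  cfc (fun z ↦ (ζ - p z)⁻¹) a

theorem sub_ofReal_ne_zero_of_im_ne_zero (hζ : ζ.im ≠ 0) (x : ℝ) : ζ - x ≠ 0 := fun h ↦
  hζ (by simpa using congrArg im h)

theorem continuous_inv_sub_ofReal (hp : Continuous p) (hζ : ζ.im ≠ 0) :
    Continuous fun z ↦ (ζ - p z)⁻¹ :=
  Continuous.inv₀ (by fun_prop) fun z ↦ sub_ofReal_ne_zero_of_im_ne_zero hζ (p z)

theorem cfc_inv_sub_cfc_inv {f : ℂ → ℂ} (hf : Continuous f) (hf₀ : ∀ z, f z ≠ 0) (a b : A)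
    [IsStarNormal a] [IsStarNormal b] :
    cfc (fun z ↦ (f z)⁻¹) a - cfc (fun z ↦ (f z)⁻¹) b =
      cfc (fun z ↦ (f z)⁻¹) a * (cfc f b - cfc f a) * cfc (fun z ↦ (f z)⁻¹) b := by
  have hinv : Continuous fun z ↦ (f z)⁻¹ := hf.inv₀ hf₀
  have hleft : cfc (fun z ↦ (f z)⁻¹) a * cfc f a = 1 := by
    rw [← cfc_mul _ _ a hinv.continuousOn hf.continuousOn]
    simp only [inv_mul_cancel₀ (hf₀ _), cfc_const_one]
  have hright : cfc f b * cfc (fun z ↦ (f z)⁻¹) b = 1 := by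
    rw [← cfc_mul _ _ b hf.continuousOn hinv.continuousOn]
    simp only [mul_inv_cancel₀ (hf₀ _), cfc_const_one]
  rw [mul_sub, sub_mul, mul_assoc, hright, hleft, mul_one, one_mul]

theorem cfcResolvent_sub_cfcResolvent (hp : Continuous p) (hζ : ζ.im ≠ 0) (a b : A)
    [IsStarNormal a] [IsStarNormal b] :
    cfcResolvent p ζ a - cfcResolvent p ζ b = cfcResolvent p ζ a *
      (cfc (fun z ↦ (p z : ℂ)) a - cfc (fun z ↦ (p z : ℂ)) b) * cfcResolvent p ζ b := by
  have hsub (c : A) [IsStarNormal c] :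
      cfc (fun z ↦ ζ - p z) c = algebraMap ℂ A ζ - cfc (fun z ↦ (p z : ℂ)) c := by
    rw [cfc_sub (fun _ ↦ ζ) (fun z ↦ (p z : ℂ)) c continuousOn_const (by fun_prop), cfc_const ζ c]
  have := cfc_inv_sub_cfc_inv (f := fun z ↦ ζ - p z) (by fun_prop)
    (fun z ↦ sub_ofReal_ne_zero_of_im_ne_zero hζ (p z)) a b
  rwa [hsub a, hsub b, sub_sub_sub_cancel_left] at this

theorem star_cfcResolvent (p : ℂ → ℝ) (ζ : ℂ) (a : A) :
    star (cfcResolvent p ζ a) = cfcResolvent p (conj ζ) a := by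
  simp [cfcResolvent, ← cfc_star]

end Resolvent

section Poisson

variable {A : Type*} [CStarAlgebra A] {p : ℂ → ℝ} {γ : ℝ≥0} {G : ℝ → ℂ → ℂ} {C : ℝ}

/-- The Poisson kernel of the half-plane `{z | -γ < z.im}`, with pole at the boundary point
`t - γ * I`, evaluated at the self-adjoint element `p(a)`. -/
noncomputable def cfcPoisson (p : ℂ → ℝ) (γ : ℝ≥0) (t : ℝ) (a : A) : A :=
  cfc (fun z ↦ (cauchyPDFReal (p z) γ t : ℂ)) a

theorem continuous_ofReal_cauchyPDFReal_comp (hp : Continuous p) (hγ : γ ≠ 0) :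
    Continuous fun q : ℝ × ℂ ↦ (cauchyPDFReal (p q.2) γ q.1 : ℂ) :=
  continuous_ofReal.comp <| (continuous_cauchyPDFReal_uncurry hγ).comp
    (by fun_prop : Continuous fun q : ℝ × ℂ ↦ (p q.2, q.1))

theorem cfcPoisson_eq_smul_cfcResolvent_sub (hp : Continuous p) (hγ : γ ≠ 0) (t : ℝ) (a : A) :
    cfcPoisson p γ t a = (2 * π * I : ℂ)⁻¹ •
      (cfcResolvent p (t - γ * I) a - cfcResolvent p (conj (t - γ * I : ℂ)) a) := by
  have hζ : (t - γ * I : ℂ).im ≠ 0 := by simpa using hγ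
  have hζ' : (conj (t - γ * I : ℂ)).im ≠ 0 := by simpa using hγ
  rw [cfcResolvent, cfcResolvent, ← cfc_sub _ _ a (continuous_inv_sub_ofReal hp hζ).continuousOn
    (continuous_inv_sub_ofReal hp hζ').continuousOn, ← cfc_const_mul _ (fun z ↦ _ - _) a
    ((continuous_inv_sub_ofReal hp hζ).sub (continuous_inv_sub_ofReal hp hζ')).continuousOn]
  simp [cfcPoisson, ofReal_cauchyPDFReal_eq_inv_sub_inv]

theorem cfcPoisson_eq_smul_star_cfcResolvent_mul (hp : Continuous p) (hγ : γ ≠ 0) (t : ℝ) (a : A) :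
    cfcPoisson p γ t a =
      (γ / π : ℂ) • (star (cfcResolvent p (t - γ * I) a) * cfcResolvent p (t - γ * I) a) := by
  have hcont := continuous_inv_sub_ofReal hp (by simpa using hγ : (t - γ * I : ℂ).im ≠ 0)
  rw [cfcResolvent, ← cfc_star, ← cfc_mul _ _ a hcont.star.continuousOn hcont.continuousOn,
    ← cfc_const_mul _ (fun z ↦ star _ * _) a (hcont.star.mul hcont).continuousOn]
  refine congrArg (cfc · a) (funext fun z ↦ ?_)
  rw [cauchyPDFReal_eq_norm_inv_sq, star_def, conj_mul', ofReal_mul, ofReal_pow, ofReal_div]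

theorem cfcPoisson_mul_cfc (hp : Continuous p) (hγ : γ ≠ 0) (t : ℝ) {g : ℂ → ℂ}
    (hg : Continuous g) (a : A) :
    cfcPoisson p γ t a * cfc g a = cfc (fun z ↦ cauchyPDFReal (p z) γ t * g z) a :=
  (cfc_mul _ _ a ((continuous_ofReal_cauchyPDFReal_comp hp hγ).comp
    (Continuous.prodMk_right t)).continuousOn hg.continuousOn).symm

theorem exists_cauchyPDFReal_le_of_isCompact (hp : Continuous p) (hγ : γ ≠ 0) {K : Set ℂ}
    (hK : IsCompact K) :
    ∃ B, ∀ z ∈ K, ∀ t, cauchyPDFReal (p z) γ t ≤ B * cauchyPDFReal 0 γ t := by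
  obtain ⟨B, hB⟩ := hK.bddAbove_image
    (by fun_prop : Continuous fun z ↦ 2 * (1 + (p z / γ) ^ 2)).continuousOn
  refine ⟨B, fun z hz t ↦ (cauchyPDFReal_le_mul_cauchyPDFReal_zero hγ (p z) t).trans ?_⟩
  exact mul_le_mul_of_nonneg_right (hB ⟨z, hz, rfl⟩) (cauchyPDF_pos 0 hγ t).le

theorem exists_hasFiniteIntegral_bound_cauchyPDFReal_mul (hp : Continuous p) (hγ : γ ≠ 0)
    (hC : ∀ t z, ‖G t z‖ ≤ C) {K : Set ℂ} (hK : IsCompact K) :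
    ∃ bound : ℝ → ℝ, HasFiniteIntegral bound ∧
      ∀ t, ∀ z ∈ K, ‖(cauchyPDFReal (p z) γ t : ℂ) * G t z‖ ≤ bound t := by
  obtain ⟨B, hB⟩ := exists_cauchyPDFReal_le_of_isCompact hp hγ hK
  refine ⟨fun t ↦ B * cauchyPDFReal 0 γ t * C,
    (((integrable_cauchyPDFReal 0).const_mul B).mul_const C).hasFiniteIntegral, fun t z hz ↦ ?_⟩
  rw [norm_mul, norm_real, Real.norm_of_nonneg (cauchyPDF_pos _ hγ _).le]
  exact mul_le_mul (hB z hz t) (hC t z) (norm_nonneg _)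
    ((cauchyPDF_pos _ hγ _).le.trans (hB z hz t))

theorem integral_cfcPoisson_mul_cfc (hp : Continuous p) (hγ : γ ≠ 0)
    (hG : Continuous (uncurry G)) (hC : ∀ t z, ‖G t z‖ ≤ C) (a : A) [IsStarNormal a] :
    ∫ t, cfcPoisson p γ t a * cfc (G t) a =
      cfc (fun z ↦ ∫ t, cauchyPDFReal (p z) γ t • G t z) a := by
  obtain ⟨bound, hbound, hle⟩ :=
    exists_hasFiniteIntegral_bound_cauchyPDFReal_mul hp hγ hC (spectrum.isCompact (𝕜 := ℂ) a)
  simp only [cfcPoisson_mul_cfc hp hγ _ (hG.uncurry_left _), real_smul]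
  exact (cfc_integral _ bound a
    ((continuous_ofReal_cauchyPDFReal_comp hp hγ).mul hG).continuousOn (.of_forall hle) hbound).symm

theorem integrable_cfcPoisson (hp : Continuous p) (hγ : γ ≠ 0) (a : A) [IsStarNormal a] :
    Integrable fun t ↦ cfcPoisson p γ t a := by
  obtain ⟨bound, hbound, hle⟩ := exists_hasFiniteIntegral_bound_cauchyPDFReal_mul hp hγ
    (G := fun _ _ ↦ 1) (fun _ _ ↦ norm_one.le) (spectrum.isCompact (𝕜 := ℂ) a)
  simp only [mul_one] at hle
  exact integrable_cfc _ bound a (continuous_ofReal_cauchyPDFReal_comp hp hγ).continuousOn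
    (.of_forall hle) hbound

theorem integral_cfcPoisson (hp : Continuous p) (hγ : γ ≠ 0) (a : A) [IsStarNormal a] :
    ∫ t, cfcPoisson p γ t a = 1 := by
  have := integral_cfcPoisson_mul_cfc hp hγ (G := fun _ _ ↦ 1) (C := 1)
    continuous_const (fun _ _ ↦ by simp) a
  simpa [integral_complex_ofReal, integral_cauchyPDFReal_eq_one _ hγ, cfc_const_one] using this

theorem cfcPoisson_sub_cfcPoisson (hp : Continuous p) (hγ : γ ≠ 0) (t : ℝ) (a b : A)
    [IsStarNormal a] [IsStarNormal b] :
    cfcPoisson p γ t a - cfcPoisson p γ t b = (2 * π * I : ℂ)⁻¹ •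
      (star (cfcResolvent p (conj (t - γ * I : ℂ)) a) *
          (cfc (fun z ↦ (p z : ℂ)) a - cfc (fun z ↦ (p z : ℂ)) b) * cfcResolvent p (t - γ * I) b -
        star (cfcResolvent p (t - γ * I) a) *
          (cfc (fun z ↦ (p z : ℂ)) a - cfc (fun z ↦ (p z : ℂ)) b) *
            cfcResolvent p (conj (t - γ * I : ℂ)) b) := by
  have hζ : (t - γ * I : ℂ).im ≠ 0 := by simpa using hγ
  have hζ' : (conj (t - γ * I : ℂ)).im ≠ 0 := by simpa using hγ
  rw [star_cfcResolvent, star_cfcResolvent, conj_conj,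
    ← cfcResolvent_sub_cfcResolvent hp hζ, ← cfcResolvent_sub_cfcResolvent hp hζ',
    cfcPoisson_eq_smul_cfcResolvent_sub hp hγ, cfcPoisson_eq_smul_cfcResolvent_sub hp hγ,
    ← smul_sub, sub_sub_sub_comm]

end Poisson

section ContinuousFamilies

variable {A : Type*} [CStarAlgebra A] {X : Type*} [TopologicalSpace X] {G : X → ℂ → ℂ}

theorem continuous_cfc_of_continuous_uncurry (hG : Continuous (uncurry G)) (a : A)
    [IsStarNormal a] : Continuous fun x ↦ cfc (G x) a := by
  let g : C(X × spectrum ℂ a, ℂ) := ⟨fun w ↦ uncurry G (w.1, w.2), hG.comp (by fun_prop)⟩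
  have hcurry (x : X) : cfc (G x) a = cfcHom (R := ℂ) (p := IsStarNormal) ‹_› (g.curry x) :=
    cfc_apply (G x) a (hf := (hG.uncurry_left x).continuousOn)
  simp only [hcurry]
  exact (cfcHom_continuous _).comp g.curry.continuous

variable [SecondCountableTopology X] [MeasurableSpace X] [OpensMeasurableSpace X]
  {μ : Measure X} {T : X → A} {C : ℝ}

theorem integrable_cfc_mul (hT : Integrable T μ) (hG : Continuous (uncurry G))
    (hC : ∀ x z, ‖G x z‖ ≤ C) (a : A) [IsStarNormal a] :
    Integrable (fun x ↦ cfc (G x) a * T x) μ :=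
  hT.bdd_mul (continuous_cfc_of_continuous_uncurry hG a).aestronglyMeasurable
    (.of_forall fun x ↦ norm_cfc_le ((norm_nonneg _).trans (hC x 0)) fun z _ ↦ hC x z)

theorem integrable_mul_cfc (hT : Integrable T μ) (hG : Continuous (uncurry G))
    (hC : ∀ x z, ‖G x z‖ ≤ C) (a : A) [IsStarNormal a] :
    Integrable (fun x ↦ T x * cfc (G x) a) μ :=
  hT.mul_bdd (continuous_cfc_of_continuous_uncurry hG a).aestronglyMeasurable
    (.of_forall fun x ↦ norm_cfc_le ((norm_nonneg _).trans (hC x 0)) fun z _ ↦ hC x z)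

end ContinuousFamilies

theorem integral_mul_integral_smul_eq {A : Type*} [NormedRing A] [NormedAlgebra ℂ A]
    {α β : Type*} [MeasurableSpace α] [MeasurableSpace β] {μ : Measure α} {ν : Measure β}
    [SFinite μ] [SFinite ν] {P : α → A} {Q : β → A} (hP : Integrable P μ) (hQ : Integrable Q ν)
    {φ : α → β → ℂ} (hφ : StronglyMeasurable (uncurry φ)) {C : ℝ} (hC : ∀ t s, ‖φ t s‖ ≤ C) :
    ∫ t, P t * (∫ s, φ t s • Q s ∂ν) ∂μ = ∫ s, (∫ t, φ t s • P t ∂μ) * Q s ∂ν := by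
  have hint : Integrable (uncurry fun t s ↦ φ t s • (P t * Q s)) (μ.prod ν) :=
    (hP.mul_prod hQ).bdd_smul C hφ.aestronglyMeasurable (.of_forall fun w ↦ hC w.1 w.2)
  have hQint (t : α) : Integrable (fun s ↦ φ t s • Q s) ν :=
    hQ.bdd_smul C hφ.of_uncurry_left.aestronglyMeasurable (.of_forall (hC t))
  have hPint (s : β) : Integrable (fun t ↦ φ t s • P t) μ :=
    hP.bdd_smul C hφ.of_uncurry_right.aestronglyMeasurable (.of_forall fun t ↦ hC t s)
  calc ∫ t, P t * (∫ s, φ t s • Q s ∂ν) ∂μ = ∫ t, ∫ s, φ t s • (P t * Q s) ∂ν ∂μ := by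
        simp only [← integral_const_mul_of_integrable (hQint _), mul_smul_comm]
    _ = ∫ s, ∫ t, φ t s • (P t * Q s) ∂μ ∂ν := integral_integral_swap hint
    _ = ∫ s, (∫ t, φ t s • P t ∂μ) * Q s ∂ν := by
        simp only [← integral_mul_const_of_integrable (hPint _), smul_mul_assoc]

/-- `h` is bounded by `C` and continuous on the closed tube `{w | -γ ≤ w.1.im ∧ -γ ≤ w.2.im}`, and
analytic in each variable separately, up to the boundary in the other one. This is
the class of functions for which Poisson's formula holds in each variable. -/
structure IsBoundedAnalyticOnTube (γ : ℝ≥0) (C : ℝ) (h : ℂ × ℂ → ℂ) : Prop where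
  continuousOn : ContinuousOn h {w | -γ ≤ w.1.im ∧ -γ ≤ w.2.im}
  differentiableOn_fst : ∀ η : ℂ, -γ ≤ η.im → DifferentiableOn ℂ (fun ζ ↦ h (ζ, η)) {ζ | -γ < ζ.im}
  differentiableOn_snd : ∀ ζ : ℂ, -γ ≤ ζ.im → DifferentiableOn ℂ (fun η ↦ h (ζ, η)) {η | -γ < η.im}
  norm_le : ∀ ζ η : ℂ, -γ ≤ ζ.im → -γ ≤ η.im → ‖h (ζ, η)‖ ≤ C

namespace IsBoundedAnalyticOnTube

variable {A : Type*} [CStarAlgebra A] {p q : ℂ → ℝ} {γ : ℝ≥0} {C : ℝ} {h : ℂ × ℂ → ℂ}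

theorem swap (hh : IsBoundedAnalyticOnTube γ C h) :
    IsBoundedAnalyticOnTube γ C (h ∘ Prod.swap) where
  continuousOn := hh.continuousOn.comp continuous_swap.continuousOn fun _ hw ↦ hw.symm
  differentiableOn_fst := hh.differentiableOn_snd
  differentiableOn_snd := hh.differentiableOn_fst
  norm_le ζ η hζ hη := hh.norm_le η ζ hη hζ

theorem diffContOnCl_fst (hh : IsBoundedAnalyticOnTube γ C h) {η : ℂ} (hη : -γ ≤ η.im) :
    DiffContOnCl ℂ (fun ζ ↦ h (ζ, η)) {ζ | -γ < ζ.im} := by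
  refine ⟨hh.differentiableOn_fst η hη, ?_⟩
  rw [closure_setOfPred_lt_im]
  exact hh.continuousOn.comp (by fun_prop) fun ζ hζ ↦ ⟨hζ, hη⟩

theorem continuous_comp (hh : IsBoundedAnalyticOnTube γ C h) {X : Type*} [TopologicalSpace X]
    {u v : X → ℂ} (hu : Continuous u) (hv : Continuous v) (hu' : ∀ x, -γ ≤ (u x).im)
    (hv' : ∀ x, -γ ≤ (v x).im) : Continuous fun x ↦ h (u x, v x) :=
  hh.continuousOn.comp_continuous (hu.prodMk hv) fun x ↦ ⟨hu' x, hv' x⟩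

theorem integral_cfcPoisson_mul_cfc (hh : IsBoundedAnalyticOnTube γ C h) (hp : Continuous p)
    (hγ : γ ≠ 0) {u : ℂ → ℂ} (hu : Continuous u) (hu' : ∀ z, -γ ≤ (u z).im) (a : A)
    [IsStarNormal a] :
    ∫ t : ℝ, cfcPoisson p γ t a * cfc (fun z ↦ h (t - γ * I, u z)) a =
      cfc (fun z ↦ h (p z, u z)) a := by
  have hline (t : ℝ) : -γ ≤ (t - γ * I : ℂ).im := by simp
  rw [_root_.integral_cfcPoisson_mul_cfc hp hγ (G := fun t z ↦ h (t - γ * I, u z))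
    (hh.continuous_comp (by fun_prop) (by fun_prop) (fun _ ↦ hline _) fun _ ↦ hu' _)
    (fun t z ↦ hh.norm_le _ _ (hline t) (hu' z))]
  simp only [fun z ↦ integral_cauchyPDFReal_smul hγ (hh.diffContOnCl_fst (hu' z))
    (fun ζ hζ ↦ hh.norm_le ζ _ hζ (hu' z)) (p z)]

theorem integral_smul_cfcPoisson (hh : IsBoundedAnalyticOnTube γ C h) (hp : Continuous p)
    (hγ : γ ≠ 0) {η : ℂ} (hη : -γ ≤ η.im) (a : A) [IsStarNormal a] :
    ∫ t : ℝ, h (t - γ * I, η) • cfcPoisson p γ t a = cfc (fun z ↦ h (p z, η)) a := by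
  rw [← hh.integral_cfcPoisson_mul_cfc hp hγ continuous_const (fun _ ↦ hη) a]
  simp only [cfc_const _ a, Algebra.algebraMap_eq_smul_one, mul_smul_comm, mul_one]

-- Both sides equal `∬ h (t - γi, s - γi) P_t(a) Q_s(b) dt ds`.
theorem integral_cfcPoisson_mul_eq_integral_mul_cfcPoisson
    (hh : IsBoundedAnalyticOnTube γ C h) (hp : Continuous p) (hq : Continuous q) (hγ : γ ≠ 0)
    (a b : A) [IsStarNormal a] [IsStarNormal b] :
    ∫ t : ℝ, cfcPoisson p γ t a * cfc (fun z ↦ h (t - γ * I, q z)) b =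
      ∫ s : ℝ, cfc (fun z ↦ h (p z, s - γ * I)) a * cfcPoisson q γ s b := by
  have hline (t : ℝ) : -γ ≤ (t - γ * I : ℂ).im := by simp
  have hswap (t : ℝ) := hh.swap.integral_smul_cfcPoisson hq hγ (hline t) b
  simp only [comp_apply, Prod.swap_prod_mk] at hswap
  simp only [← hswap, ← hh.integral_smul_cfcPoisson hp hγ (hline _) a]
  exact integral_mul_integral_smul_eq (integrable_cfcPoisson hp hγ a)
    (integrable_cfcPoisson hq hγ b)
    (hh.continuous_comp (by fun_prop) (by fun_prop) (fun _ ↦ hline _)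
      fun _ ↦ hline _).stronglyMeasurable
    (fun t s ↦ hh.norm_le _ _ (hline t) (hline s))

theorem cfc_sub_cfc_eq (hh : IsBoundedAnalyticOnTube γ C h) (hp : Continuous p)
    (hq : Continuous q) (hγ : γ ≠ 0) (a b : A) [IsStarNormal a] [IsStarNormal b] :
    cfc (fun z ↦ h (p z, q z)) a - cfc (fun z ↦ h (p z, q z)) b =
      (∫ s : ℝ, cfc (fun z ↦ h (p z, s - γ * I)) a * (cfcPoisson q γ s a - cfcPoisson q γ s b)) +
        ∫ t : ℝ, (cfcPoisson p γ t a - cfcPoisson p γ t b) *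
          cfc (fun z ↦ h (t - γ * I, q z)) b := by
  have hint_snd (c : A) [IsStarNormal c] :
      Integrable fun s : ℝ ↦ cfc (fun z ↦ h (p z, s - γ * I)) a * cfcPoisson q γ s c :=
    integrable_cfc_mul (integrable_cfcPoisson hq hγ c)
      (hh.continuous_comp (by fun_prop) (by fun_prop) (by simp) (by simp))
      (fun s z ↦ hh.norm_le _ _ (by simp) (by simp)) a
  have hint_fst (c : A) [IsStarNormal c] :
      Integrable fun t : ℝ ↦ cfcPoisson p γ t c * cfc (fun z ↦ h (t - γ * I, q z)) b :=
    integrable_mul_cfc (integrable_cfcPoisson hp hγ c)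
      (hh.continuous_comp (by fun_prop) (by fun_prop) (by simp) (by simp))
      (fun t z ↦ hh.norm_le _ _ (by simp) (by simp)) b
  have hrepr (c : A) [IsStarNormal c] := hh.integral_cfcPoisson_mul_cfc hp hγ
    (u := fun z ↦ q z) (by fun_prop) (by simp) c
  simp only [mul_sub, sub_mul]
  rw [integral_sub (hint_snd a) (hint_snd b), integral_sub (hint_fst a) (hint_fst b),
    ← hh.integral_cfcPoisson_mul_eq_integral_mul_cfcPoisson hp hq hγ a a,
    ← hh.integral_cfcPoisson_mul_eq_integral_mul_cfcPoisson hp hq hγ a b,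
    hrepr a, hrepr b, sub_add_sub_cancel]

end IsBoundedAnalyticOnTube

section Hilbert

variable {H : Type*} [NormedAddCommGroup H] [InnerProductSpace ℂ H] [CompleteSpace H]
  {p : ℂ → ℝ} {γ : ℝ≥0}

theorem norm_cfcResolvent_conj_apply (p : ℂ → ℝ) (ζ : ℂ) (a : H →L[ℂ] H) (v : H) :
    ‖cfcResolvent p (conj ζ) a v‖ = ‖cfcResolvent p ζ a v‖ := by
  rw [← star_cfcResolvent, ContinuousLinearMap.star_eq_adjoint]
  have hnormal : IsStarNormal (cfcResolvent p ζ a) := by unfold cfcResolvent; infer_instance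
  exact (ContinuousLinearMap.isStarNormal_iff_norm_eq_adjoint.1 hnormal v).symm

theorem norm_cfcResolvent_apply_sq (hp : Continuous p) (hγ : γ ≠ 0) (t : ℝ) (a : H →L[ℂ] H)
    (v : H) : ‖cfcResolvent p (t - γ * I) a v‖ ^ 2 = π / γ * (⟪v, cfcPoisson p γ t a v⟫_ℂ).re := by
  have hinner : ⟪v, cfcPoisson p γ t a v⟫_ℂ =
      (γ / π * ‖cfcResolvent p (t - γ * I) a v‖ ^ 2 : ℝ) := by
    rw [cfcPoisson_eq_smul_star_cfcResolvent_mul hp hγ, smul_apply, mul_apply_eq_comp,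
      ContinuousLinearMap.star_eq_adjoint, inner_smul_right,
      ContinuousLinearMap.adjoint_inner_right, inner_self_eq_norm_sq_to_K]
    push_cast
    rfl
  rw [hinner, ofReal_re]
  field [Real.pi_ne_zero]

theorem integrable_norm_cfcResolvent_apply_sq (hp : Continuous p) (hγ : γ ≠ 0) (a : H →L[ℂ] H)
    [IsStarNormal a] (v : H) :
    Integrable fun t : ℝ ↦ ‖cfcResolvent p (t - γ * I) a v‖ ^ 2 := by
  simp only [norm_cfcResolvent_apply_sq hp hγ]
  have := (integrable_cfcPoisson hp hγ a).apply_continuousLinearMap v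
  exact (this.const_inner (𝕜 := ℂ) v).re.const_mul _

theorem integral_norm_cfcResolvent_apply_sq (hp : Continuous p) (hγ : γ ≠ 0) (a : H →L[ℂ] H)
    [IsStarNormal a] (v : H) :
    ∫ t : ℝ, ‖cfcResolvent p (t - γ * I) a v‖ ^ 2 = π / γ * ‖v‖ ^ 2 := by
  have hint := integrable_cfcPoisson hp hγ a
  have hint_apply := hint.apply_continuousLinearMap v
  have hre : ∫ t, (⟪v, cfcPoisson p γ t a v⟫_ℂ).re = (∫ t, ⟪v, cfcPoisson p γ t a v⟫_ℂ).re :=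
    integral_re (hint_apply.const_inner (𝕜 := ℂ) v)
  simp only [norm_cfcResolvent_apply_sq hp hγ, integral_const_mul]
  rw [hre, integral_inner hint_apply, ← ContinuousLinearMap.integral_apply hint,
    integral_cfcPoisson hp hγ, one_apply_eq_self]
  exact congrArg _ (norm_sq_eq_re_inner (𝕜 := ℂ) v).symm

theorem norm_integral_le_of_norm_inner_le {α : Type*} [MeasurableSpace α] {μ : Measure α}
    {T X Y : α → H →L[ℂ] H} {D K : ℝ} (hD : 0 ≤ D) (hK : 0 ≤ K) (hT : Integrable T μ)
    (hTXY : ∀ t u v, ‖⟪u, T t v⟫_ℂ‖ ≤ D * (‖X t u‖ * ‖Y t v‖))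
    (hXint : ∀ u, Integrable (fun t ↦ ‖X t u‖ ^ 2) μ) (hX : ∀ u, ∫ t, ‖X t u‖ ^ 2 ∂μ ≤ K * ‖u‖ ^ 2)
    (hYint : ∀ v, Integrable (fun t ↦ ‖Y t v‖ ^ 2) μ)
    (hY : ∀ v, ∫ t, ‖Y t v‖ ^ 2 ∂μ ≤ K * ‖v‖ ^ 2) : ‖∫ t, T t ∂μ‖ ≤ D * K := by
  refine ContinuousLinearMap.opNorm_le_of_re_inner_le (𝕜 := ℂ) (by positivity)
    fun v u hv hu ↦ ?_
  have hTv : Integrable (fun t ↦ T t v) μ := hT.apply_continuousLinearMap v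
  calc RCLike.re ⟪(∫ t, T t ∂μ) v, u⟫_ℂ ≤ ‖⟪u, (∫ t, T t ∂μ) v⟫_ℂ‖ :=
        (RCLike.re_le_norm _).trans_eq (norm_inner_symm _ _)
    _ = ‖∫ t, ⟪u, T t v⟫_ℂ ∂μ‖ := by rw [ContinuousLinearMap.integral_apply hT, integral_inner hTv]
    _ ≤ ∫ t, D / 2 * (‖X t u‖ ^ 2 + ‖Y t v‖ ^ 2) ∂μ := by
        refine norm_integral_le_of_norm_le (((hXint u).add (hYint v)).const_mul _)
          (.of_forall fun t ↦ (hTXY t u v).trans ?_)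
        nlinarith [mul_nonneg hD (sq_nonneg (‖X t u‖ - ‖Y t v‖))]
    _ = D / 2 * (∫ t, ‖X t u‖ ^ 2 ∂μ + ∫ t, ‖Y t v‖ ^ 2 ∂μ) := by
        rw [integral_const_mul, integral_add (hXint u) (hYint v)]
    _ ≤ D / 2 * (K + K) := by
        gcongr
        · simpa [hu] using hX u
        · simpa [hv] using hY v
    _ = D * K := by ring

theorem norm_inner_star_mul_mul_apply_le (X K Y : H →L[ℂ] H) (u v : H) :
    ‖⟪u, (star X * K * Y) v⟫_ℂ‖ ≤ ‖K‖ * (‖X u‖ * ‖Y v‖) := by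
  rw [ContinuousLinearMap.star_eq_adjoint, mul_assoc, mul_apply_eq_comp,
    ContinuousLinearMap.adjoint_inner_right, mul_apply_eq_comp]
  calc ‖⟪X u, K (Y v)⟫_ℂ‖ ≤ ‖X u‖ * ‖K (Y v)‖ := norm_inner_le_norm _ _
    _ ≤ ‖X u‖ * (‖K‖ * ‖Y v‖) := by gcongr; exact K.le_opNorm _
    _ = ‖K‖ * (‖X u‖ * ‖Y v‖) := by ring

theorem norm_inner_cfcPoisson_sub_apply_le (hp : Continuous p) (hγ : γ ≠ 0) (t : ℝ)
    (a b : H →L[ℂ] H) [IsStarNormal a] [IsStarNormal b] (u v : H) :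
    ‖⟪u, (cfcPoisson p γ t a - cfcPoisson p γ t b) v⟫_ℂ‖ ≤
      ‖cfc (fun z ↦ (p z : ℂ)) a - cfc (fun z ↦ (p z : ℂ)) b‖ / π *
        (‖cfcResolvent p (t - γ * I) a u‖ * ‖cfcResolvent p (t - γ * I) b v‖) := by
  rw [cfcPoisson_sub_cfcPoisson hp hγ, smul_apply, inner_smul_right,
    sub_apply, inner_sub_right, norm_mul]
  have hconst : ‖(2 * π * I : ℂ)⁻¹‖ = (2 * π)⁻¹ := by simp [abs_of_pos Real.pi_pos]
  have hbound := norm_sub_le_of_le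
    (norm_inner_star_mul_mul_apply_le (cfcResolvent p (conj (t - γ * I : ℂ)) a)
      (cfc (fun z ↦ (p z : ℂ)) a - cfc (fun z ↦ (p z : ℂ)) b) (cfcResolvent p (t - γ * I) b) u v)
    (norm_inner_star_mul_mul_apply_le (cfcResolvent p (t - γ * I) a)
      (cfc (fun z ↦ (p z : ℂ)) a - cfc (fun z ↦ (p z : ℂ)) b)
      (cfcResolvent p (conj (t - γ * I : ℂ)) b) u v)
  rw [norm_cfcResolvent_conj_apply, norm_cfcResolvent_conj_apply] at hbound
  rw [hconst]
  refine (mul_le_mul_of_nonneg_left hbound (by positivity)).trans_eq ?_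
  field

theorem norm_cfcResolvent_apply_cfc_apply_le {ζ : ℂ} {g : ℂ → ℂ} {C : ℝ} (hC : 0 ≤ C)
    (hg : ∀ z, ‖g z‖ ≤ C) (p : ℂ → ℝ) (a : H →L[ℂ] H) (v : H) :
    ‖cfcResolvent p ζ a (cfc g a v)‖ ≤ C * ‖cfcResolvent p ζ a v‖ := by
  have hcomm : cfcResolvent p ζ a * cfc g a = cfc g a * cfcResolvent p ζ a :=
    (cfc_commute_cfc _ _ a).eq
  rw [← mul_apply_eq_comp, hcomm, mul_apply_eq_comp]
  exact (cfc g a).le_of_opNorm_le (norm_cfc_le hC fun z _ ↦ hg z) _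

theorem norm_inner_cfc_mul_cfcPoisson_sub_mul_cfc_apply_le (hp : Continuous p) (hγ : γ ≠ 0) (t : ℝ)
    {g₁ g₂ : ℂ → ℂ} {C₁ C₂ : ℝ} (hC₁ : ∀ z, ‖g₁ z‖ ≤ C₁) (hC₂ : ∀ z, ‖g₂ z‖ ≤ C₂)
    (a b : H →L[ℂ] H) [IsStarNormal a] [IsStarNormal b] (u v : H) :
    ‖⟪u, (cfc g₁ a * (cfcPoisson p γ t a - cfcPoisson p γ t b) * cfc g₂ b) v⟫_ℂ‖ ≤
      C₁ * C₂ / π * ‖cfc (fun z ↦ (p z : ℂ)) a - cfc (fun z ↦ (p z : ℂ)) b‖ *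
        (‖cfcResolvent p (t - γ * I) a u‖ * ‖cfcResolvent p (t - γ * I) b v‖) := by
  have hC₁0 : 0 ≤ C₁ := (norm_nonneg _).trans (hC₁ 0)
  have hadjoint : cfc g₁ a = star (cfc (fun z ↦ star (g₁ z)) a) := by rw [cfc_star, star_star]
  have hu := norm_cfcResolvent_apply_cfc_apply_le (ζ := t - γ * I) (g := fun z ↦ star (g₁ z)) hC₁0
    (by simpa using hC₁) p a u
  have hv := norm_cfcResolvent_apply_cfc_apply_le (ζ := t - γ * I)
    ((norm_nonneg _).trans (hC₂ 0)) hC₂ p b v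
  rw [mul_assoc, mul_apply_eq_comp, mul_apply_eq_comp, hadjoint,
    ContinuousLinearMap.star_eq_adjoint, ContinuousLinearMap.adjoint_inner_right]
  refine (norm_inner_cfcPoisson_sub_apply_le hp hγ t a b _ _).trans
    ((mul_le_mul_of_nonneg_left (mul_le_mul hu hv ?_ ?_) ?_).trans_eq (by ring))
  all_goals positivity

theorem norm_integral_cfc_mul_cfcPoisson_sub_mul_cfc_le (hp : Continuous p) (hγ : γ ≠ 0)
    {G₁ G₂ : ℝ → ℂ → ℂ} {C₁ C₂ : ℝ} (hG₁ : Continuous (uncurry G₁)) (hG₂ : Continuous (uncurry G₂))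
    (hC₁ : ∀ t z, ‖G₁ t z‖ ≤ C₁) (hC₂ : ∀ t z, ‖G₂ t z‖ ≤ C₂) (a b : H →L[ℂ] H)
    [IsStarNormal a] [IsStarNormal b] :
    ‖∫ t, cfc (G₁ t) a * (cfcPoisson p γ t a - cfcPoisson p γ t b) * cfc (G₂ t) b‖ ≤
      C₁ * C₂ / γ * ‖cfc (fun z ↦ (p z : ℂ)) a - cfc (fun z ↦ (p z : ℂ)) b‖ := by
  have hC₁0 : 0 ≤ C₁ := (norm_nonneg _).trans (hC₁ 0 0)
  have hC₂0 : 0 ≤ C₂ := (norm_nonneg _).trans (hC₂ 0 0)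
  have hint := integrable_mul_cfc (integrable_cfc_mul
    ((integrable_cfcPoisson hp hγ a).sub (integrable_cfcPoisson hp hγ b)) hG₁ hC₁ a) hG₂ hC₂ b
  refine (norm_integral_le_of_norm_inner_le (K := π / γ) (by positivity) (by positivity) hint
    (fun t ↦ norm_inner_cfc_mul_cfcPoisson_sub_mul_cfc_apply_le hp hγ t (hC₁ t) (hC₂ t) a b)
    (integrable_norm_cfcResolvent_apply_sq hp hγ a)
    (fun u ↦ (integral_norm_cfcResolvent_apply_sq hp hγ a u).le)
    (integrable_norm_cfcResolvent_apply_sq hp hγ b)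
    (fun v ↦ (integral_norm_cfcResolvent_apply_sq hp hγ b v).le)).trans_eq ?_
  field [Real.pi_ne_zero]

theorem IsBoundedAnalyticOnTube.norm_cfc_sub_cfc_le {q : ℂ → ℝ} {C : ℝ} {h : ℂ × ℂ → ℂ}
    (hh : IsBoundedAnalyticOnTube γ C h) (hp : Continuous p) (hq : Continuous q) (hγ : γ ≠ 0)
    (a b : H →L[ℂ] H) [IsStarNormal a] [IsStarNormal b] :
    ‖cfc (fun z ↦ h (p z, q z)) a - cfc (fun z ↦ h (p z, q z)) b‖ ≤
      C / γ * (‖cfc (fun z ↦ (p z : ℂ)) a - cfc (fun z ↦ (p z : ℂ)) b‖ +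
        ‖cfc (fun z ↦ (q z : ℂ)) a - cfc (fun z ↦ (q z : ℂ)) b‖) := by
  have hsnd := norm_integral_cfc_mul_cfcPoisson_sub_mul_cfc_le hq hγ
    (G₁ := fun s z ↦ h (p z, s - γ * I)) (G₂ := fun _ _ ↦ 1)
    (hh.continuous_comp (by fun_prop) (by fun_prop) (by simp) (by simp)) continuous_const
    (fun s z ↦ hh.norm_le _ _ (by simp) (by simp)) (fun _ _ ↦ norm_one.le) a b
  have hfst := norm_integral_cfc_mul_cfcPoisson_sub_mul_cfc_le hp hγ
    (G₁ := fun _ _ ↦ 1) (G₂ := fun t z ↦ h (t - γ * I, q z)) continuous_const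
    (hh.continuous_comp (by fun_prop) (by fun_prop) (by simp) (by simp))
    (fun _ _ ↦ norm_one.le) (fun t z ↦ hh.norm_le _ _ (by simp) (by simp)) a b
  simp only [cfc_const_one, mul_one, one_mul] at hsnd hfst
  rw [hh.cfc_sub_cfc_eq hp hq hγ, mul_add, add_comm (C / γ * _)]
  exact norm_add_le_of_le hsnd hfst

end Hilbert

section ExponentialType

/-- The plane wave `exp (σ i (z₁ + z₂))`, which is unimodular on `ℝ²`, decays in the upper tube and
so compensates there the growth of functions of exponential type `σ`. -/
noncomputable def planeWave (σ : ℝ) (w : ℂ × ℂ) : ℂ :=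
  exp (σ * (w.1 + w.2) * I)

theorem norm_planeWave (σ : ℝ) (w : ℂ × ℂ) :
    ‖planeWave σ w‖ = Real.exp (-(σ * (w.1.im + w.2.im))) := by
  rw [planeWave, norm_exp, mul_assoc, re_ofReal_mul]
  simp only [add_mul, add_re, mul_I_re, neg_add, mul_add, mul_neg]

theorem norm_planeWave_ofReal (σ x y : ℝ) : ‖planeWave σ (x, y)‖ = 1 := by
  simp [norm_planeWave]

theorem differentiable_planeWave (σ : ℝ) : Differentiable ℂ (planeWave σ) := by
  unfold planeWave
  fun_prop

theorem mul_abs_sub_le_two {σ y : ℝ} (hσ : 0 < σ) (hy : -σ⁻¹ ≤ y) : σ * (|y| - y) ≤ 2 := by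
  have hσy : -1 ≤ σ * y := by simpa [hσ.ne'] using mul_le_mul_of_nonneg_left hy hσ.le
  rcases abs_cases y with ⟨habs, _⟩ | ⟨habs, _⟩ <;> rw [habs] <;> linarith

theorem isBoundedAnalyticOnTube_planeWave_mul {σ : ℝ≥0} (hσ : σ ≠ 0) {M : ℝ} {F : ℂ × ℂ → ℂ}
    (hF : Differentiable ℂ F)
    (hM : ∀ z, ‖F z‖ ≤ M * Real.exp (σ * (|z.1.im| + |z.2.im|))) :
    IsBoundedAnalyticOnTube σ⁻¹ (M * Real.exp 4) fun w ↦ planeWave σ w * F w := by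
  have hσ' : (0 : ℝ) < σ := by positivity
  have hM0 : 0 ≤ M := by simpa using (norm_nonneg _).trans (hM 0)
  have hdiff : Differentiable ℂ fun w ↦ planeWave σ w * F w := (differentiable_planeWave σ).mul hF
  refine ⟨hdiff.continuous.continuousOn,
    fun η _ ↦ (hdiff.comp (by fun_prop : Differentiable ℂ fun ζ : ℂ ↦ (ζ, η))).differentiableOn,
    fun ζ _ ↦ (hdiff.comp (by fun_prop : Differentiable ℂ fun η : ℂ ↦ (ζ, η))).differentiableOn,
    fun ζ η hζ hη ↦ ?_⟩
  have hexp : -(σ * (ζ.im + η.im)) + σ * (|ζ.im| + |η.im|) ≤ 4 := by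
    linarith [mul_abs_sub_le_two hσ' hζ, mul_abs_sub_le_two hσ' hη]
  calc ‖planeWave σ (ζ, η) * F (ζ, η)‖
      ≤ Real.exp (-(σ * (ζ.im + η.im))) * (M * Real.exp (σ * (|ζ.im| + |η.im|))) := by
        rw [norm_mul, norm_planeWave]
        gcongr
        exact hM (ζ, η)
    _ = M * Real.exp (-(σ * (ζ.im + η.im)) + σ * (|ζ.im| + |η.im|)) := by rw [Real.exp_add]; ring
    _ ≤ M * Real.exp 4 := by gcongr

theorem isBoundedAnalyticOnTube_planeWave {σ : ℝ≥0} (hσ : σ ≠ 0) :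
    IsBoundedAnalyticOnTube σ⁻¹ (Real.exp 4) (planeWave σ) := by
  simpa using isBoundedAnalyticOnTube_planeWave_mul hσ (M := 1) (F := fun _ ↦ 1)
    (differentiable_const 1) fun z ↦ by simpa using by positivity

theorem cfc_eq_star_cfc_planeWave_mul {A : Type*} [CStarAlgebra A] (σ : ℝ) {F : ℂ × ℂ → ℂ}
    (hF : Continuous F) (a : A) :
    cfc (fun z ↦ F (z.re, z.im)) a = star (cfc (fun z ↦ planeWave σ (z.re, z.im)) a) *
      cfc (fun z ↦ planeWave σ (z.re, z.im) * F (z.re, z.im)) a := by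
  have hwave := (differentiable_planeWave σ).continuous
  rw [← cfc_star, ← cfc_mul _ _ a (by fun_prop) (by fun_prop)]
  refine congrArg (cfc · a) (funext fun z ↦ ?_)
  rw [← mul_assoc, star_def, conj_mul', norm_planeWave_ofReal]
  simp

theorem norm_star_mul_sub_star_mul_le {A : Type*} [NormedRing A] [StarRing A] [NormedStarGroup A]
    {u₁ u₂ x₁ x₂ : A} {M : ℝ} (hu : ‖u₁‖ ≤ 1) (hx : ‖x₂‖ ≤ M) :
    ‖star u₁ * x₁ - star u₂ * x₂‖ ≤ ‖x₁ - x₂‖ + ‖u₁ - u₂‖ * M := by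
  have hsplit : star u₁ * x₁ - star u₂ * x₂ = star u₁ * (x₁ - x₂) + star (u₁ - u₂) * x₂ := by
    rw [star_sub]
    noncomm_ring
  rw [hsplit]
  refine norm_add_le_of_le ((norm_mul_le _ _).trans ?_) ((norm_mul_le _ _).trans ?_)
  · rw [norm_star u₁]
    exact mul_le_of_le_one_left (norm_nonneg _) hu
  · rw [norm_star (u₁ - u₂)]
    gcongr

end ExponentialType

section RealImaginaryParts

variable {A : Type*} [CStarAlgebra A] (a b : A) [IsStarNormal a] [IsStarNormal b]

theorem norm_cfc_re_sub_cfc_re_le :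
    ‖cfc (fun z : ℂ ↦ (z.re : ℂ)) a - cfc (fun z : ℂ ↦ (z.re : ℂ)) b‖ ≤ ‖a - b‖ := by
  rw [cfc_re_id a, cfc_re_id b, ← AddSubgroupClass.coe_sub, ← map_sub]
  exact realPart.norm_le (a - b)

theorem norm_cfc_im_sub_cfc_im_le :
    ‖cfc (fun z : ℂ ↦ (z.im : ℂ)) a - cfc (fun z : ℂ ↦ (z.im : ℂ)) b‖ ≤ ‖a - b‖ := by
  rw [cfc_im_id a, cfc_im_id b, ← AddSubgroupClass.coe_sub, ← map_sub]
  exact imaginaryPart.norm_le (a - b)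

end RealImaginaryParts

theorem IsBoundedAnalyticOnTube.norm_cfc_re_im_sub_le {H : Type*} [NormedAddCommGroup H]
    [InnerProductSpace ℂ H] [CompleteSpace H] {γ : ℝ≥0} {C : ℝ} {h : ℂ × ℂ → ℂ}
    (hh : IsBoundedAnalyticOnTube γ C h) (hγ : γ ≠ 0) (a b : H →L[ℂ] H) [IsStarNormal a]
    [IsStarNormal b] :
    ‖cfc (fun z ↦ h (z.re, z.im)) a - cfc (fun z ↦ h (z.re, z.im)) b‖ ≤
      2 * C / γ * ‖a - b‖ := by
  have hC : 0 ≤ C := (norm_nonneg _).trans (hh.norm_le 0 0 (by simp) (by simp))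
  calc _ ≤ C / γ * (‖a - b‖ + ‖a - b‖) := by
        refine (hh.norm_cfc_sub_cfc_le continuous_re continuous_im hγ a b).trans ?_
        gcongr
        · exact norm_cfc_re_sub_cfc_re_le a b
        · exact norm_cfc_im_sub_cfc_im_le a b
    _ = 2 * C / γ * ‖a - b‖ := by ring

end BandlimitedCalculus

/-- Operator Lipschitz estimate for normal operators and functions bandlimited on `ℝ²`:
there is an absolute constant `c > 0` such that if `F : ℂ² → ℂ` is entire with
`|F(z₁,z₂)| ≤ M·exp(σ(|Im z₁| + |Im z₂|))` and `f : ℂ → ℂ` is defined by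
`f(x + iy) = F(x, y)`, then for all bounded normal operators `N₁, N₂`,
`‖f(N₁) − f(N₂)‖ ≤ c·σ·M·‖N₁ − N₂‖`, where `f(N)` is given by the continuous
functional calculus for normal operators. -/
theorem normal_operator_lipschitz_bandlimited :
    ∃ c : ℝ, 0 < c ∧
      ∀ (H : Type*) [NormedAddCommGroup H] [InnerProductSpace ℂ H] [CompleteSpace H],
      ∀ (σ M : ℝ), 0 < σ → 0 < M →
      ∀ (F : ℂ × ℂ → ℂ), Differentiable ℂ F →
        (∀ z : ℂ × ℂ, ‖F z‖ ≤ M * Real.exp (σ * (|z.1.im| + |z.2.im|))) →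
      ∀ (N₁ N₂ : H →L[ℂ] H), IsStarNormal N₁ → IsStarNormal N₂ →
        ‖cfc (fun z : ℂ => F ((z.re : ℂ), (z.im : ℂ))) N₁ -
            cfc (fun z : ℂ => F ((z.re : ℂ), (z.im : ℂ))) N₂‖
          ≤ c * σ * M * ‖N₁ - N₂‖ := by
  refine ⟨4 * Real.exp 4, by positivity, fun H _ _ _ σ M hσ hM F hF hFM N₁ N₂ _ _ ↦ ?_⟩
  lift σ to NNReal using hσ.le
  have hσ₀ : σ ≠ 0 := by exact_mod_cast hσ.ne'
  have hwaveF := (isBoundedAnalyticOnTube_planeWave_mul hσ₀ hF hFM).norm_cfc_re_im_sub_le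
    (inv_ne_zero hσ₀) N₁ N₂
  have hwave := (isBoundedAnalyticOnTube_planeWave hσ₀).norm_cfc_re_im_sub_le
    (inv_ne_zero hσ₀) N₁ N₂
  rw [cfc_eq_star_cfc_planeWave_mul σ hF.continuous N₁,
    cfc_eq_star_cfc_planeWave_mul σ hF.continuous N₂]
  refine (norm_star_mul_sub_star_mul_le (M := M)
    (norm_cfc_le zero_le_one fun z _ ↦ (norm_planeWave_ofReal σ z.re z.im).le)
    (norm_cfc_le hM.le fun z _ ↦ ?_)).trans ?_
  · rw [norm_mul, norm_planeWave_ofReal, one_mul]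
    simpa using hFM (z.re, z.im)
  · calc _ ≤ 2 * (M * Real.exp 4) / (σ⁻¹ : NNReal) * ‖N₁ - N₂‖ +
          2 * Real.exp 4 / (σ⁻¹ : NNReal) * ‖N₁ - N₂‖ * M := by gcongr
      _ = 4 * Real.exp 4 * σ * M * ‖N₁ - N₂‖ := by simp only [NNReal.coe_inv, div_inv_eq_mul]; ring
end
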